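/- arXiv:math/9403216 — 3 statements merged into one kernel-verified Lean document; each statement's English description precedes it below -/
import Mathlib

section
/- (q-Saalschütz summation) Let 0<q<1, n∈ℤ_{≥0}, and a,b,c∈ℂ with ab≠0, c ∉ {1,q^{-1},…,q^{-n+1}} and ab q^{1-n}/c ∉ {1,q^{-1},…,q^{-n+1}}. Then ₃φ₂(a, b, q^{-n}; c, ab c^{-1} q^{1-n}; q, q) = (c/a, c/b;q)_n / (c, c/(ab);q)_n. -/
/-!
With `e = c / (a b)` and the products depending on `q^{-n}` reversed, multiplication by
`(c, e; q)_n` turns the summation into the polynomial identity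
`∑_{k+m=n} [k+m choose k]_q (a)_k (b)_k (e a b q^k)_m e^k (e)_m = (e a)_n (e b)_n`.
Its summands `T(k, m)` form a weighted Pascal triangle: by the two Pascal rules for the Gaussian
binomial, `T(k+1, m+1) = α(k+1, m) T(k+1, m) + β(k, m+1) T(k, m+1)` with
`α(k, m) = (1 - e q^m) (1 - e a b q^{2k+m})` and `β(k, m) = e q^m (1 - a q^k) (1 - b q^k)`.
The total weight `α(k, m) + β(k, m) = (1 - e a q^{k+m}) (1 - e b q^{k+m})` depends on `k + m` only,
so the sum over `k + m = n + 1` is that multiple of the sum over `k + m = n`.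
-/

noncomputable section

/-- The finite q-shifted factorial `(a;q)_k`. -/
def qp (q a : ℂ) (k : ℕ) : ℂ := ∏ j ∈ Finset.range k, (1 - a * q ^ j)

/-- The basic hypergeometric series `₃φ₂(a₁,a₂,a₃;b₁,b₂;q,z)`. -/
def phi32 (q a1 a2 a3 b1 b2 z : ℂ) : ℂ :=
  ∑' k : ℕ, qp q a1 k * qp q a2 k * qp q a3 k / (qp q b1 k * qp q b2 k * qp q q k) * z ^ k

open Finset

section GaussBinom

variable {R : Type*}

/-- The Gaussian binomial coefficient `[k+m choose k]_q`, defined by its first Pascal rule. It is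
indexed by `k` and `m` rather than by `k + m` and `k`, so that no natural-number subtraction
occurs. -/
def gaussBinom [Semiring R] (q : R) : ℕ → ℕ → R
  | 0, _ => 1
  | _ + 1, 0 => 1
  | k + 1, m + 1 => gaussBinom q (k + 1) m + q ^ (m + 1) * gaussBinom q k (m + 1)

lemma gaussBinom_zero_left [Semiring R] (q : R) (m : ℕ) : gaussBinom q 0 m = 1 := by
  rw [gaussBinom]

lemma gaussBinom_zero_right [Semiring R] (q : R) (k : ℕ) : gaussBinom q k 0 = 1 := by
  cases k <;> rw [gaussBinom]

lemma gaussBinom_succ_succ [Semiring R] (q : R) (k m : ℕ) :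
    gaussBinom q (k + 1) (m + 1) =
      gaussBinom q (k + 1) m + q ^ (m + 1) * gaussBinom q k (m + 1) := by
  rw [gaussBinom]

lemma gaussBinom_succ_succ' [CommSemiring R] (q : R) (k m : ℕ) :
    gaussBinom q (k + 1) (m + 1) =
      q ^ (k + 1) * gaussBinom q (k + 1) m + gaussBinom q k (m + 1) := by
  induction k generalizing m with
  | zero =>
    induction m with
    | zero => simp only [gaussBinom_succ_succ, gaussBinom_zero_left, gaussBinom_zero_right]; ring
    | succ m ihm =>
      calc
        _ = q ^ 1 * gaussBinom q 1 m + 1 + q ^ (m + 2) := by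
          simp only [gaussBinom_succ_succ q 0 (m + 1), ihm, gaussBinom_zero_left, zero_add, mul_one]
        _ = q ^ 1 * (gaussBinom q 1 m + q ^ (m + 1)) + 1 := by ring
        _ = _ := by simp only [gaussBinom_succ_succ q 0 m, gaussBinom_zero_left, zero_add, mul_one]
  | succ k ihk =>
    induction m with
    | zero =>
      calc
        _ = 1 + q ^ 1 * (q ^ (k + 1) + gaussBinom q k 1) := by
          simp only [gaussBinom_succ_succ q (k + 1) 0, ihk, gaussBinom_zero_right, zero_add,
            mul_one]
        _ = q ^ (k + 2) + (1 + q ^ 1 * gaussBinom q k 1) := by ring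
        _ = _ := by simp only [gaussBinom_succ_succ q k 0, gaussBinom_zero_right, zero_add, mul_one]
    | succ m ihm =>
      calc
        _ = (q ^ (k + 2) * gaussBinom q (k + 2) m + gaussBinom q (k + 1) (m + 1)) +
              q ^ (m + 2) * (q ^ (k + 1) * gaussBinom q (k + 1) (m + 1) +
                gaussBinom q k (m + 2)) := by
          rw [gaussBinom_succ_succ q (k + 1), ihm, ihk (m + 1)]
        _ = q ^ (k + 2) * (gaussBinom q (k + 2) m + q ^ (m + 1) * gaussBinom q (k + 1) (m + 1)) +
              (gaussBinom q (k + 1) (m + 1) + q ^ (m + 2) * gaussBinom q k (m + 2)) := by ring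
        _ = _ := by rw [← gaussBinom_succ_succ q (k + 1) m, ← gaussBinom_succ_succ q k (m + 1)]

end GaussBinom

/-- `L k m` and `R k m` are what the entry `T k m` contributes to its two descendants `T k (m + 1)`
and `T (k + 1) m`. -/
lemma sum_antidiagonal_succ_of_pascal {M : Type*} [AddCommMonoid M] {T L R : ℕ → ℕ → M}
    (h_left : ∀ m, T 0 (m + 1) = L 0 m) (h_right : ∀ k, T (k + 1) 0 = R k 0)
    (h_mid : ∀ k m, T (k + 1) (m + 1) = L (k + 1) m + R k (m + 1)) (n : ℕ) :
    ∑ p ∈ antidiagonal (n + 1), T p.1 p.2 = ∑ p ∈ antidiagonal n, (L p.1 p.2 + R p.1 p.2) := by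
  cases n with
  | zero => simp [Nat.sum_antidiagonal_succ, h_left, h_right]
  | succ n =>
    rw [Nat.sum_antidiagonal_succ, Nat.sum_antidiagonal_succ', sum_add_distrib,
      Nat.sum_antidiagonal_succ, Nat.sum_antidiagonal_succ' (f := fun p => R p.1 p.2)]
    simp only [h_left, h_right, h_mid, sum_add_distrib]
    abel

section ShiftedFactorial

variable (q a : ℂ)

lemma qp_zero : qp q a 0 = 1 := prod_range_zero _

lemma qp_succ (k : ℕ) : qp q a (k + 1) = qp q a k * (1 - a * q ^ k) :=
  prod_range_succ _ k

lemma qp_add (k m : ℕ) : qp q a (k + m) = qp q a k * qp q (a * q ^ k) m := by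
  simp only [qp, prod_range_add, pow_add, mul_assoc]

lemma qp_succ' (k : ℕ) : qp q a (k + 1) = (1 - a) * qp q (a * q) k := by
  rw [add_comm, qp_add, qp_succ, qp_zero, pow_zero, pow_one, one_mul, mul_one]

lemma gaussBinom_mul_qp_mul_qp (k m : ℕ) :
    gaussBinom q k m * qp q q k * qp q q m = qp q q (k + m) := by
  induction k generalizing m with
  | zero => rw [gaussBinom_zero_left, qp_zero, zero_add, one_mul, one_mul]
  | succ k ihk =>
    induction m with
    | zero => rw [gaussBinom_zero_right, qp_zero, add_zero, one_mul, mul_one]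
    | succ m ihm =>
      have h_left : gaussBinom q (k + 1) m * qp q q (k + 1) * qp q q m = qp q q (k + m + 1) := by
        rw [ihm, add_right_comm]
      have h_right : gaussBinom q k (m + 1) * qp q q k * qp q q (m + 1) = qp q q (k + m + 1) :=
        ihk (m + 1)
      rw [gaussBinom_succ_succ, ← add_assoc, add_right_comm k 1 m, qp_succ q q (k + m + 1)]
      simp only [qp_succ q q k, qp_succ q q m] at h_left h_right ⊢
      linear_combination (1 - q * q ^ m) * h_left + q ^ (m + 1) * (1 - q * q ^ k) * h_right

variable {q a}

lemma qp_ne_zero {k : ℕ} (h : ∀ j < k, a * q ^ j ≠ 1) : qp q a k ≠ 0 :=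
  prod_ne_zero_iff.2 fun j hj => sub_ne_zero.2 (h j (mem_range.1 hj)).symm

lemma qp_eq_zero {n k : ℕ} (h : a * q ^ n = 1) (hnk : n < k) : qp q a k = 0 :=
  prod_eq_zero (mem_range.2 hnk) (by rw [h, sub_self])

/-- The factors correspond in reverse order, by `1 - y q^j = -y q^j (1 - y⁻¹ q^{-j})`. -/
lemma qp_inv_mul_zpow {y : ℂ} (hq : q ≠ 0) (hy : y ≠ 0) (k : ℕ) :
    qp q (y⁻¹ * q ^ (1 - k : ℤ)) k * ((-y) ^ k * q ^ k.choose 2) = qp q y k := by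
  induction k with
  | zero => simp [qp_zero]
  | succ k ih =>
    have h_param : y⁻¹ * q ^ (1 - (k + 1 : ℕ) : ℤ) * q = y⁻¹ * q ^ (1 - k : ℤ) := by
      rw [mul_assoc, ← zpow_add_one₀ hq]
      congr 2
      push_cast
      ring
    have h_first : (1 - y⁻¹ * q ^ (1 - (k + 1 : ℕ) : ℤ)) * (-y * q ^ k) = 1 - y * q ^ k := by
      have : q ^ (1 - (k + 1 : ℕ) : ℤ) = (q ^ k)⁻¹ := by
        rw [← zpow_natCast, ← zpow_neg]
        congr 1
        push_cast
        ring
      rw [this]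
      field_simp
      ring
    rw [qp_succ', h_param, qp_succ, ← ih, ← h_first, Nat.choose_succ_succ' k 1,
      Nat.choose_one_right]
    ring

lemma qp_inv_mul_zpow_div {y z : ℂ} (hq : q ≠ 0) (hy : y ≠ 0) (hz : z ≠ 0) (k m : ℕ) :
    qp q (y⁻¹ * q ^ (1 - (k + m : ℕ) : ℤ)) k / qp q (z⁻¹ * q ^ (1 - (k + m : ℕ) : ℤ)) k =
      (z / y) ^ k * (qp q (y * q ^ m) k / qp q (z * q ^ m) k) := by
  have h_param (x : ℂ) : (x * q ^ m)⁻¹ * q ^ (1 - k : ℤ) = x⁻¹ * q ^ (1 - (k + m : ℕ) : ℤ) := by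
    rw [mul_inv, mul_assoc, ← zpow_natCast, ← zpow_neg, ← zpow_add₀ hq]
    congr 2
    push_cast
    ring
  rw [← qp_inv_mul_zpow hq (mul_ne_zero hy (pow_ne_zero m hq)) k,
    ← qp_inv_mul_zpow hq (mul_ne_zero hz (pow_ne_zero m hq)) k, h_param, h_param]
  have hqm := pow_ne_zero m hq
  have h_ratio : (-(y * q ^ m)) ^ k * q ^ k.choose 2 / ((-(z * q ^ m)) ^ k * q ^ k.choose 2) =
      (y / z) ^ k := by
    rw [mul_div_mul_right _ _ (pow_ne_zero _ hq), ← div_pow, neg_div_neg_eq,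
      mul_div_mul_right _ _ hqm]
  rw [mul_div_mul_comm, h_ratio, mul_left_comm, ← mul_pow, div_mul_div_cancel₀ hy, div_self hz,
    one_pow, mul_one]

end ShiftedFactorial

/-- The summand `T(k, m)` of the polynomial form of the q-Saalschütz summation with `k + m = n`; the
parameters `c` and `c / (a b)` of the series are `e a b` and `e`. -/
def saalschutzSummand (q a b e : ℂ) (k m : ℕ) : ℂ :=
  gaussBinom q k m * qp q a k * qp q b k * qp q (e * a * b * q ^ k) m * e ^ k * qp q e m

section Saalschutz

variable (q a b e : ℂ)

lemma saalschutzSummand_zero_succ (m : ℕ) :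
    saalschutzSummand q a b e 0 (m + 1) =
      (1 - e * q ^ m) * (1 - e * a * b * q ^ m) * saalschutzSummand q a b e 0 m := by
  simp only [saalschutzSummand, gaussBinom_zero_left, qp_zero, qp_succ, pow_zero, mul_one]
  ring

lemma saalschutzSummand_succ_zero (k : ℕ) :
    saalschutzSummand q a b e (k + 1) 0 =
      e * (1 - a * q ^ k) * (1 - b * q ^ k) * saalschutzSummand q a b e k 0 := by
  simp only [saalschutzSummand, gaussBinom_zero_right, qp_zero, qp_succ, pow_succ]
  ring

lemma saalschutzSummand_succ_succ (k m : ℕ) :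
    saalschutzSummand q a b e (k + 1) (m + 1) =
      (1 - e * q ^ m) * (1 - e * a * b * q ^ (2 * (k + 1) + m)) *
          saalschutzSummand q a b e (k + 1) m +
        e * q ^ (m + 1) * (1 - a * q ^ k) * (1 - b * q ^ k) *
          saalschutzSummand q a b e k (m + 1) := by
  have h_pascal : gaussBinom q (k + 1) (m + 1) * (1 - e * a * b * q ^ (k + 1 + m)) =
      gaussBinom q (k + 1) m * (1 - e * a * b * q ^ (2 * (k + 1) + m)) +
        gaussBinom q k (m + 1) * q ^ (m + 1) * (1 - e * a * b * q ^ k) := by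
    linear_combination gaussBinom_succ_succ q k m -
      e * a * b * q ^ (k + 1 + m) * gaussBinom_succ_succ' q k m
  have h_left : qp q (e * a * b * q ^ k) (m + 1) =
      (1 - e * a * b * q ^ k) * qp q (e * a * b * q ^ (k + 1)) m := by
    rw [qp_succ', mul_assoc _ (q ^ k), ← pow_succ]
  have h_right : qp q (e * a * b * q ^ (k + 1)) (m + 1) =
      qp q (e * a * b * q ^ (k + 1)) m * (1 - e * a * b * q ^ (k + 1 + m)) := by
    rw [qp_succ, mul_assoc _ (q ^ (k + 1)), ← pow_add]
  simp only [saalschutzSummand, h_left, h_right, qp_succ q a, qp_succ q b, qp_succ q e]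
  linear_combination qp q a k * (1 - a * q ^ k) * (qp q b k * (1 - b * q ^ k)) *
    qp q (e * a * b * q ^ (k + 1)) m * e ^ (k + 1) * (qp q e m * (1 - e * q ^ m)) * h_pascal

theorem sum_antidiagonal_saalschutzSummand (n : ℕ) :
    ∑ p ∈ antidiagonal n, saalschutzSummand q a b e p.1 p.2 =
      qp q (e * a) n * qp q (e * b) n := by
  induction n with
  | zero => simp [saalschutzSummand, gaussBinom_zero_left, qp_zero]
  | succ n ih =>
    rw [sum_antidiagonal_succ_of_pascal
      (L := fun k m => (1 - e * q ^ m) * (1 - e * a * b * q ^ (2 * k + m)) *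
        saalschutzSummand q a b e k m)
      (R := fun k m => e * q ^ m * (1 - a * q ^ k) * (1 - b * q ^ k) *
        saalschutzSummand q a b e k m)
      (fun m => by simpa using saalschutzSummand_zero_succ q a b e m)
      (fun k => by simpa using saalschutzSummand_succ_zero q a b e k)
      (saalschutzSummand_succ_succ q a b e)]
    calc
      _ = ∑ p ∈ antidiagonal n, (1 - e * a * q ^ n) * (1 - e * b * q ^ n) *
            saalschutzSummand q a b e p.1 p.2 := by
        refine sum_congr rfl fun p hp => ?_
        rw [← mem_antidiagonal.1 hp]
        ring
      _ = qp q (e * a) (n + 1) * qp q (e * b) (n + 1) := by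
        rw [← mul_sum, ih, qp_succ, qp_succ]
        ring

variable {q a b e}

/-- For `k > n` the numerator vanishes; where the denominator vanishes too, the summand is still `0`
because `0 / 0 = 0`. -/
lemma phi32_eq_sum_antidiagonal {a₃ : ℂ} {n : ℕ} (h : a₃ * q ^ n = 1) (a₁ a₂ b₁ b₂ z : ℂ) :
    phi32 q a₁ a₂ a₃ b₁ b₂ z =
      ∑ p ∈ antidiagonal n, qp q a₁ p.1 * qp q a₂ p.1 * qp q a₃ p.1 /
        (qp q b₁ p.1 * qp q b₂ p.1 * qp q q p.1) * z ^ p.1 := by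
  rw [Nat.sum_antidiagonal_eq_sum_range_succ_mk]
  refine tsum_eq_sum fun k hk => ?_
  rw [qp_eq_zero h (by simpa using hk), mul_zero, zero_div, zero_mul]

lemma phi32_summand_eq_saalschutzSummand_div (hq : q ≠ 0) (he : e ≠ 0) {k m : ℕ}
    (hqm : qp q q (k + m) ≠ 0) (hcm : qp q (e * a * b) (k + m) ≠ 0) (hem : qp q e (k + m) ≠ 0) :
    qp q a k * qp q b k * qp q (q ^ (k + m))⁻¹ k /
        (qp q (e * a * b) k * qp q (e⁻¹ * q ^ (1 - (k + m : ℕ) : ℤ)) k * qp q q k) * q ^ k =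
      saalschutzSummand q a b e k m / (qp q (e * a * b) (k + m) * qp q e (k + m)) := by
  have h_param : (q ^ (k + m))⁻¹ = q⁻¹ * q ^ (1 - (k + m : ℕ) : ℤ) := by
    rw [zpow_sub₀ hq, zpow_one, zpow_natCast]
    field_simp
  have h_split (y : ℂ) : qp q y (k + m) = qp q y m * qp q (y * q ^ m) k := by
    rw [add_comm, qp_add]
  have h_binom : gaussBinom q k m * qp q q k = qp q (q * q ^ m) k := by
    refine mul_right_cancel₀ (left_ne_zero_of_mul (h_split q ▸ hqm)) ?_
    rw [gaussBinom_mul_qp_mul_qp, h_split, mul_comm]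
  have hqk : qp q q k ≠ 0 := left_ne_zero_of_mul (qp_add q q k m ▸ hqm)
  rw [h_split e] at hem ⊢
  rw [qp_add] at hcm ⊢
  obtain ⟨hem₁, hem₂⟩ := mul_ne_zero_iff.1 hem
  obtain ⟨hcm₁, hcm₂⟩ := mul_ne_zero_iff.1 hcm
  rw [h_param]
  calc
    _ = qp q a k * qp q b k / (qp q (e * a * b) k * qp q q k) *
          (qp q (q⁻¹ * q ^ (1 - (k + m : ℕ) : ℤ)) k / qp q (e⁻¹ * q ^ (1 - (k + m : ℕ) : ℤ)) k) *
            q ^ k := by ring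
    _ = qp q a k * qp q b k / (qp q (e * a * b) k * qp q q k) *
          ((e / q) ^ k * (gaussBinom q k m * qp q q k / qp q (e * q ^ m) k)) * q ^ k := by
      rw [qp_inv_mul_zpow_div hq hq he, h_binom]
    _ = _ := by
      rw [saalschutzSummand, div_pow]
      field_simp

theorem phi32_saalschutz (hq : q ≠ 0) (he : e ≠ 0) {n : ℕ} (hqn : qp q q n ≠ 0)
    (hc : qp q (e * a * b) n ≠ 0) (hd : qp q (e⁻¹ * q ^ (1 - n : ℤ)) n ≠ 0) :
    phi32 q a b (q ^ n)⁻¹ (e * a * b) (e⁻¹ * q ^ (1 - n : ℤ)) q =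
      qp q (e * a) n * qp q (e * b) n / (qp q (e * a * b) n * qp q e n) := by
  have hen : qp q e n ≠ 0 := by
    rw [← qp_inv_mul_zpow hq he]
    exact mul_ne_zero hd
      (mul_ne_zero (pow_ne_zero _ (neg_ne_zero.2 he)) (pow_ne_zero _ hq))
  rw [phi32_eq_sum_antidiagonal (inv_mul_cancel₀ (pow_ne_zero n hq)),
    ← sum_antidiagonal_saalschutzSummand, sum_div]
  refine sum_congr rfl fun p hp => ?_
  obtain rfl := mem_antidiagonal.1 hp
  exact phi32_summand_eq_saalschutzSummand_div hq he hqn hc hen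

end Saalschutz

theorem stmt14_general (q : ℂ) (hq : q ≠ 0) (n : ℕ) (hqn : ∀ j < n, q ^ (j + 1) ≠ 1) (a b c : ℂ)
    (hab : a * b ≠ 0) (hc0 : c ≠ 0) (hc : ∀ j < n, c * q ^ j ≠ 1)
    (hd : ∀ j < n, a * b * c⁻¹ * q ^ (1 - n : ℤ) * q ^ j ≠ 1) :
    phi32 q a b (q ^ n)⁻¹ c (a * b * c⁻¹ * q ^ (1 - n : ℤ)) q =
      qp q (c / a) n * qp q (c / b) n / (qp q c n * qp q (c / (a * b)) n) := by
  obtain ⟨ha, hb⟩ := mul_ne_zero_iff.1 hab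
  have hce : c / (a * b) * a * b = c := by field_simp
  have hei : (c / (a * b))⁻¹ = a * b * c⁻¹ := by rw [inv_div, div_eq_mul_inv]
  have hca : c / (a * b) * b = c / a := by field_simp
  have hcb : c / (a * b) * a = c / b := by field_simp
  have h := phi32_saalschutz (a := a) (b := b) hq (div_ne_zero hc0 hab)
    (qp_ne_zero fun j hj => by simpa only [← pow_succ'] using hqn j hj)
    (by rw [hce]; exact qp_ne_zero hc) (by rw [hei]; exact qp_ne_zero hd)
  rwa [hce, hei, hca, hcb, mul_comm (qp q (c / b) n)] at h

/-- The q-Saalschütz summation: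
`₃φ₂(a,b,q^{-n}; c, ab c^{-1} q^{1-n}; q, q) = (c/a,c/b;q)_n / (c,c/(ab);q)_n`
for `0<q<1`, `ab ≠ 0`, `c ≠ 0`, and the lower parameters avoiding
`{1, q^{-1}, …, q^{-n+1}}`. -/
theorem stmt14 (q : ℝ) (hq0 : 0 < q) (hq1 : q < 1) (n : ℕ) (a b c : ℂ)
    (hab : a * b ≠ 0) (hc0 : c ≠ 0)
    (hc : ∀ j : ℕ, j < n → c * (q : ℂ) ^ j ≠ 1)
    (hd : ∀ j : ℕ, j < n → a * b * c⁻¹ * (q : ℂ) ^ ((1 : ℤ) - (n : ℤ)) * (q : ℂ) ^ j ≠ 1) :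
    phi32 (q : ℂ) a b (((q : ℂ) ^ n)⁻¹) c
        (a * b * c⁻¹ * (q : ℂ) ^ ((1 : ℤ) - (n : ℤ))) (q : ℂ) =
      qp (q : ℂ) (c / a) n * qp (q : ℂ) (c / b) n /
        (qp (q : ℂ) c n * qp (q : ℂ) (c / (a * b)) n) := by
  refine stmt14_general q (mod_cast hq0.ne') n (fun j _ => ?_) a b c hab hc0 hc hd
  exact_mod_cast (pow_lt_one₀ hq0.le hq1 j.succ_ne_zero).ne
end
end

section
/- (Contiguous relation for the Askey-Wilson integral) Let 0<q<1 and a,b,c,d∈ℂ with |a|,|b|,|c|,|d|<1. Then I_{a,b,c,d} = ((1-abcd)/((1-ab)(1-ac)(1-ad))) · I_{qa,b,c,d}. -/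
/-!
The weights `w_{a,b,c,d}` and `w_{qa,b,c,d}` are multiples of one symmetric function, and a rational
function identity shows that
`(1-ab)(1-ac)(1-ad) w_{a,b,c,d}(z) - (1-abcd) w_{qa,b,c,d}(z) = a (G(z) + G(1/z))` with
`G(z) = z (z², qz⁻²;q)_∞ / (az, bz, cz, dz, qa/z, qb/z, qc/z, qd/z;q)_∞`.

It remains to see that the mean `M` of `G` over the unit circle vanishes. Since `G` is holomorphic
near the closed annulus `|q| ≤ |z| ≤ 1`, its means over the two boundary circles agree, so `M` is
also the mean of `G(qz)` over the unit circle. But `G(qz) = -G(1/z)` for `q ≠ 0`, whence `M = -M`;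
for `q = 0` the mean value property gives `M = G(0) = 0`.
-/

noncomputable section

/-- The infinite q-shifted factorial `(a;q)_∞`. -/
def qpi (q a : ℂ) : ℂ := ∏' j : ℕ, (1 - a * q ^ j)

/-- The Askey-Wilson weight
`w_{a,b,c,d}(z) = (z²,z^{-2};q)_∞ / (az,az^{-1},bz,bz^{-1},cz,cz^{-1},dz,dz^{-1};q)_∞`. -/
def AWw (q a b c d z : ℂ) : ℂ :=
  qpi q (z ^ 2) * qpi q (z⁻¹ ^ 2) /
    (qpi q (a * z) * qpi q (a * z⁻¹) * qpi q (b * z) * qpi q (b * z⁻¹) *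
      qpi q (c * z) * qpi q (c * z⁻¹) * qpi q (d * z) * qpi q (d * z⁻¹))

/-- The Askey-Wilson integral `I_{a,b,c,d} = (2πi)⁻¹ ∮_{|z|=1} w_{a,b,c,d}(z) dz/z`. -/
def AWI (q a b c d : ℂ) : ℂ :=
  (2 * (Real.pi : ℂ) * Complex.I)⁻¹ * circleIntegral (fun z => AWw q a b c d z / z) 0 1

open Metric Real

theorem norm_mul_lt_one {R : Type*} [NonUnitalSeminormedRing R] {x y : R} (hx : ‖x‖ < 1)
    (hy : ‖y‖ ≤ 1) : ‖x * y‖ < 1 :=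
  (norm_mul_le x y).trans_lt (mul_lt_one_of_nonneg_of_lt_one_left (norm_nonneg x) hx hy)

section CircleAverage

theorem circleAverage_const_mul (w : ℂ) (f : ℂ → ℂ) (c : ℂ) (R : ℝ) :
    circleAverage (fun z => w * f z) c R = w * circleAverage f c R :=
  circleAverage_fun_smul (a := w) (f := f)

variable {E : Type*} [NormedAddCommGroup E] [NormedSpace ℂ E]

theorem circleAverage_comp_mul_left (f : ℂ → E) (w : ℂ) (R : ℝ) :
    circleAverage (fun z => f (w * z)) 0 R = circleAverage f 0 (‖w‖ * R) := by
  have rotate (θ : ℝ) : w * circleMap 0 R θ = circleMap 0 (‖w‖ * R) (θ + w.arg) := by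
    rw [add_comm, ← circleMap_zero_mul, circleMap_zero ‖w‖, Complex.norm_mul_exp_arg_mul_I]
  rw [circleAverage_eq_integral_add (f := f) w.arg]
  simp only [circleAverage, rotate]

theorem circleAverage_eq_of_differentiableOn_annulus [CompleteSpace E] {f : ℂ → E} {c : ℂ}
    {r R : ℝ} (hr : 0 ≤ r) (hrR : r ≤ R) (hc : ContinuousOn f (closedBall c R \ ball c r))
    (hd : DifferentiableOn ℂ f (ball c R \ closedBall c r)) :
    circleAverage f c R = circleAverage f c r := by
  have hd' (z : ℂ) (hz : z ∈ ball c R \ closedBall c r) : DifferentiableAt ℂ f z :=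
    hd.differentiableAt ((isOpen_ball.sdiff isClosed_closedBall).mem_nhds hz)
  rcases hr.eq_or_lt with rfl | hr
  · rw [circleAverage_zero]
    refine circleAverage_of_differentiable_on_off_countable (Set.countable_singleton c) ?_ ?_
    · simpa [abs_of_nonneg hrR] using hc
    · simpa [abs_of_nonneg hrR] using hd'
  · rw [circleAverage_eq_circleIntegral (hr.trans_le hrR).ne',
      circleAverage_eq_circleIntegral hr.ne',
      Complex.circleIntegral_sub_center_inv_smul_eq_of_differentiable_on_annulus_off_countable
        hr hrR Set.countable_empty hc (by simpa using hd')]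

end CircleAverage

theorem contiguous_rational_identity {K : Type*} [Field K] {a b c d z : K} (hz : z ≠ 0)
    (ha : 1 - a * z ≠ 0) (hb : 1 - b * z ≠ 0) (hc : 1 - c * z ≠ 0) (hd : 1 - d * z ≠ 0)
    (ha' : 1 - a * z⁻¹ ≠ 0) (hb' : 1 - b * z⁻¹ ≠ 0) (hc' : 1 - c * z⁻¹ ≠ 0)
    (hd' : 1 - d * z⁻¹ ≠ 0) :
    (1 - a * b) * (1 - a * c) * (1 - a * d) * ((1 - z ^ 2) * (1 - z⁻¹ ^ 2) /
        ((1 - a * z) * (1 - a * z⁻¹) * (1 - b * z) * (1 - b * z⁻¹) *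
          (1 - c * z) * (1 - c * z⁻¹) * (1 - d * z) * (1 - d * z⁻¹))) -
      (1 - a * b * c * d) * ((1 - z ^ 2) * (1 - z⁻¹ ^ 2) /
        ((1 - b * z) * (1 - b * z⁻¹) * (1 - c * z) * (1 - c * z⁻¹) *
          (1 - d * z) * (1 - d * z⁻¹))) =
      a * (z * (1 - z ^ 2) / ((1 - a * z) * (1 - b * z) * (1 - c * z) * (1 - d * z)) +
        z⁻¹ * (1 - z⁻¹ ^ 2) /
          ((1 - a * z⁻¹) * (1 - b * z⁻¹) * (1 - c * z⁻¹) * (1 - d * z⁻¹))) := by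
  have hinv (x : K) : 1 - x * z⁻¹ = (z - x) / z := by field_simp
  simp only [hinv, div_ne_zero_iff] at *
  field_simp [ha'.1, hb'.1, hc'.1, hd'.1]
  ring

section AskeyWilson

variable {q a b c d z : ℂ}

section QPochhammer

theorem summable_norm_neg_mul_pow (hq : ‖q‖ < 1) (x : ℂ) :
    Summable fun j : ℕ => ‖-(x * q ^ j)‖ := by
  simpa using (summable_geometric_of_lt_one (norm_nonneg q) hq).mul_left ‖x‖

theorem qpi_eq_one_sub_mul (hq : ‖q‖ < 1) (x : ℂ) : qpi q x = (1 - x) * qpi q (q * x) := by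
  have shift (j : ℕ) : 1 - x * q ^ (j + 1) = 1 - q * x * q ^ j := by ring
  have hm : Multipliable fun j : ℕ => 1 - q * x * q ^ j :=
    multipliable_one_add_of_summable (summable_norm_neg_mul_pow hq (q * x))
  rw [qpi, tprod_eq_zero_mul' (by simpa only [shift] using hm)]
  simp only [shift, pow_zero, mul_one, qpi]

theorem qpi_ne_zero {x : ℂ} (hq : ‖q‖ < 1) (hx : ‖x‖ < 1) : qpi q x ≠ 0 := by
  refine tprod_one_add_ne_zero_of_summable (f := fun j : ℕ => -(x * q ^ j)) (fun j => ?_)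
    (summable_norm_neg_mul_pow hq x)
  have hj : ‖q ^ j‖ ≤ 1 := by simpa using pow_le_one₀ (norm_nonneg q) hq.le
  simpa only [sub_eq_add_neg] using (isUnit_one_sub_of_norm_lt_one (norm_mul_lt_one hx hj)).ne_zero

theorem differentiable_qpi (hq : ‖q‖ < 1) : Differentiable ℂ (qpi q) := by
  intro x
  have hx : ball (0 : ℂ) (‖x‖ + 1) ∈ nhds x := isOpen_ball.mem_nhds (by simp)
  have hprod : HasProdLocallyUniformlyOn (fun (j : ℕ) (y : ℂ) => 1 + -(y * q ^ j)) (qpi q)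
      (ball 0 (‖x‖ + 1)) := by
    refine Summable.hasProdLocallyUniformlyOn_nat_one_add isOpen_ball
      ((summable_geometric_of_lt_one (norm_nonneg q) hq).mul_left (‖x‖ + 1))
      (.of_forall fun j y hy => ?_) fun j => by fun_prop
    have hy : ‖y‖ ≤ ‖x‖ + 1 := (mem_ball_zero_iff.1 hy).le
    rw [norm_neg, norm_mul, norm_pow]
    gcongr
  refine (hprod.differentiableOn (.of_forall fun s => ?_) isOpen_ball).differentiableAt hx
  simpa [Finset.prod_fn] using DifferentiableOn.finsetProd fun _ _ => by fun_prop

end QPochhammer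

/-- The symmetric function `(qz², qz⁻²;q)_∞ / ∏_{x ∈ {a,b,c,d}} (qxz, qx/z;q)_∞`, obtained from the
Askey-Wilson weight `w_{a,b,c,d}` by deleting the leading factor of every `q`-shifted factorial. It
is a common multiple of all the functions in the contiguous relation. -/
def AWR (q a b c d z : ℂ) : ℂ :=
  qpi q (q * z ^ 2) * qpi q (q * z⁻¹ ^ 2) /
    (qpi q (q * (a * z)) * qpi q (q * (a * z⁻¹)) * qpi q (q * (b * z)) * qpi q (q * (b * z⁻¹)) *
      qpi q (q * (c * z)) * qpi q (q * (c * z⁻¹)) * qpi q (q * (d * z)) * qpi q (q * (d * z⁻¹)))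

/-- The half-shifted Askey-Wilson weight
`G(z) = z (z², qz⁻²;q)_∞ / ∏_{x ∈ {a,b,c,d}} (xz, qx/z;q)_∞`, whose symmetrization `G(z) + G(1/z)`
is the integrand of the contiguous relation. -/
def AWG (q a b c d z : ℂ) : ℂ :=
  z * qpi q (z ^ 2) * qpi q (q * z⁻¹ ^ 2) /
    (qpi q (a * z) * qpi q (q * (a * z⁻¹)) * qpi q (b * z) * qpi q (q * (b * z⁻¹)) *
      qpi q (c * z) * qpi q (q * (c * z⁻¹)) * qpi q (d * z) * qpi q (q * (d * z⁻¹)))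

section Factorization

theorem AWR_inv (q a b c d z : ℂ) : AWR q a b c d z⁻¹ = AWR q a b c d z := by
  simp only [AWR, inv_inv]
  ring

theorem AWw_eq_mul_AWR (hq : ‖q‖ < 1) (a b c d z : ℂ) :
    AWw q a b c d z = (1 - z ^ 2) * (1 - z⁻¹ ^ 2) /
      ((1 - a * z) * (1 - a * z⁻¹) * (1 - b * z) * (1 - b * z⁻¹) *
        (1 - c * z) * (1 - c * z⁻¹) * (1 - d * z) * (1 - d * z⁻¹)) * AWR q a b c d z := by
  rw [AWw, AWR, div_mul_div_comm]
  simp only [qpi_eq_one_sub_mul hq (_ * z), qpi_eq_one_sub_mul hq (_ * z⁻¹),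
    qpi_eq_one_sub_mul hq (z ^ 2), qpi_eq_one_sub_mul hq (z⁻¹ ^ 2)]
  congr 1 <;> ring

theorem AWw_mul_left_eq_mul_AWR (hq : ‖q‖ < 1) (a b c d z : ℂ) :
    AWw q (q * a) b c d z = (1 - z ^ 2) * (1 - z⁻¹ ^ 2) /
      ((1 - b * z) * (1 - b * z⁻¹) * (1 - c * z) * (1 - c * z⁻¹) *
        (1 - d * z) * (1 - d * z⁻¹)) * AWR q a b c d z := by
  rw [AWw, AWR, div_mul_div_comm]
  simp only [mul_assoc q a, qpi_eq_one_sub_mul hq (b * _), qpi_eq_one_sub_mul hq (c * _),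
    qpi_eq_one_sub_mul hq (d * _), qpi_eq_one_sub_mul hq (z ^ 2), qpi_eq_one_sub_mul hq (z⁻¹ ^ 2)]
  congr 1 <;> ring

theorem AWG_eq_mul_AWR (hq : ‖q‖ < 1) (a b c d z : ℂ) :
    AWG q a b c d z = z * (1 - z ^ 2) /
      ((1 - a * z) * (1 - b * z) * (1 - c * z) * (1 - d * z)) * AWR q a b c d z := by
  rw [AWG, AWR, div_mul_div_comm, qpi_eq_one_sub_mul hq (z ^ 2), qpi_eq_one_sub_mul hq (a * z),
    qpi_eq_one_sub_mul hq (b * z), qpi_eq_one_sub_mul hq (c * z), qpi_eq_one_sub_mul hq (d * z)]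
  congr 1 <;> ring

theorem AWG_mul_left (hq0 : q ≠ 0) (hq : ‖q‖ < 1) (a b c d : ℂ) (hz : z ≠ 0) :
    AWG q a b c d (q * z) = -AWG q a b c d z⁻¹ := by
  have hnum : qpi q (q * (q * z)⁻¹ ^ 2) = (1 - q⁻¹ * z⁻¹ ^ 2) * qpi q (z⁻¹ ^ 2) := by
    rw [qpi_eq_one_sub_mul hq]
    congr 2 <;> field_simp
  have hnum' : qpi q (q * z ^ 2) = (1 - q * z ^ 2) * qpi q ((q * z) ^ 2) := by
    rw [qpi_eq_one_sub_mul hq]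
    ring_nf
  have hden (x : ℂ) : q * (x * (q * z)⁻¹) = x * z⁻¹ := by field_simp
  simp only [AWG, inv_inv, hnum, hnum', hden, mul_left_comm _ q z]
  rw [← neg_div]
  congr 1
  · field_simp
    ring
  · ring

end Factorization

section Differentiability

theorem differentiableAt_AWw (hq : ‖q‖ < 1) (ha : ‖a‖ < 1) (hb : ‖b‖ < 1) (hc : ‖c‖ < 1)
    (hd : ‖d‖ < 1) (hz : ‖z‖ = 1) : DifferentiableAt ℂ (AWw q a b c d) z := by
  have hz0 : z ≠ 0 := norm_ne_zero_iff.1 (by simp [hz])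
  have hdiff := differentiable_qpi hq
  have hne {x : ℂ} (hx : ‖x‖ < 1) : qpi q (x * z) ≠ 0 ∧ qpi q (x * z⁻¹) ≠ 0 :=
    ⟨qpi_ne_zero hq (norm_mul_lt_one hx hz.le),
      qpi_ne_zero hq (norm_mul_lt_one hx (by simp [hz]))⟩
  unfold AWw
  fun_prop (disch := simp [*])

theorem differentiableAt_AWG (hq : ‖q‖ < 1) (ha : ‖a‖ < 1) (hb : ‖b‖ < 1) (hc : ‖c‖ < 1)
    (hd : ‖d‖ < 1) (hqz : ‖q‖ ≤ ‖z‖) (hz : ‖z‖ ≤ 1) : DifferentiableAt ℂ (AWG q a b c d) z := by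
  have hdiff := differentiable_qpi hq
  have hinv (n : ℕ) : DifferentiableAt ℂ (fun y : ℂ => q * y⁻¹ ^ n) z := by
    rcases eq_or_ne z 0 with rfl | hz0
    · obtain rfl : q = 0 := by simpa using hqz
      simp
    · fun_prop (disch := assumption)
  have hinv₁ : DifferentiableAt ℂ (fun y : ℂ => q * y⁻¹) z := by simpa using hinv 1
  have hqz' : ‖q * z⁻¹‖ ≤ 1 := by
    rw [norm_mul, norm_inv, ← div_eq_mul_inv]
    exact div_le_one_of_le₀ hqz (norm_nonneg z)
  have hne {x : ℂ} (hx : ‖x‖ < 1) : qpi q (x * z) ≠ 0 ∧ qpi q (x * (q * z⁻¹)) ≠ 0 :=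
    ⟨qpi_ne_zero hq (norm_mul_lt_one hx hz), qpi_ne_zero hq (norm_mul_lt_one hx hqz')⟩
  unfold AWG
  simp only [mul_left_comm q _ (_⁻¹)]
  fun_prop (disch := simp [*])

end Differentiability

section ContiguousRelation

theorem AWw_contiguous (hq : ‖q‖ < 1) (ha : ‖a‖ < 1) (hb : ‖b‖ < 1) (hc : ‖c‖ < 1)
    (hd : ‖d‖ < 1) (hz : ‖z‖ = 1) :
    (1 - a * b) * (1 - a * c) * (1 - a * d) * AWw q a b c d z -
        (1 - a * b * c * d) * AWw q (q * a) b c d z =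
      a * (AWG q a b c d z + AWG q a b c d z⁻¹) := by
  have hz0 : z ≠ 0 := norm_ne_zero_iff.1 (by simp [hz])
  have hne {x y : ℂ} (hx : ‖x‖ < 1) (hy : ‖y‖ = 1) : 1 - x * y ≠ 0 :=
    (isUnit_one_sub_of_norm_lt_one (norm_mul_lt_one hx hy.le)).ne_zero
  have hz' : ‖z⁻¹‖ = 1 := by simp [hz]
  rw [AWw_eq_mul_AWR hq, AWw_mul_left_eq_mul_AWR hq, AWG_eq_mul_AWR hq, AWG_eq_mul_AWR hq,
    AWR_inv]
  linear_combination AWR q a b c d z * contiguous_rational_identity hz0 (hne ha hz) (hne hb hz)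
    (hne hc hz) (hne hd hz) (hne ha hz') (hne hb hz') (hne hc hz') (hne hd hz')

theorem circleAverage_AWG_eq_zero (hq : ‖q‖ < 1) (ha : ‖a‖ < 1) (hb : ‖b‖ < 1) (hc : ‖c‖ < 1)
    (hd : ‖d‖ < 1) : circleAverage (AWG q a b c d) 0 1 = 0 := by
  have hdiff {z : ℂ} : ‖q‖ ≤ ‖z‖ → ‖z‖ ≤ 1 → DifferentiableAt ℂ (AWG q a b c d) z :=
    differentiableAt_AWG hq ha hb hc hd
  have hannulus : circleAverage (AWG q a b c d) 0 1 = circleAverage (AWG q a b c d) 0 ‖q‖ := by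
    refine circleAverage_eq_of_differentiableOn_annulus (norm_nonneg q) hq.le
      (fun z hz => ?_) fun z hz => ?_
    · exact (hdiff (by simpa using hz.2) (by simpa using hz.1)).continuousAt.continuousWithinAt
    · have hz' : ‖z‖ < 1 ∧ ‖q‖ < ‖z‖ := by simpa using hz
      exact (hdiff hz'.2.le hz'.1.le).differentiableWithinAt
  rcases eq_or_ne q 0 with rfl | hq0
  · rw [hannulus, norm_zero, circleAverage_zero, AWG]
    simp
  refine self_eq_neg.1 ?_
  calc circleAverage (AWG q a b c d) 0 1
      = circleAverage (fun z => AWG q a b c d (q * z)) 0 1 := by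
        rw [circleAverage_comp_mul_left, mul_one, hannulus]
    _ = circleAverage (fun z => (-1 : ℂ) • AWG q a b c d z⁻¹) 0 1 :=
        circleAverage_congr_sphere fun z hz => by
          have hz0 : z ≠ 0 := norm_ne_zero_iff.1 (by simp_all)
          simp only [AWG_mul_left hq0 hq a b c d hz0, neg_one_smul]
    _ = -circleAverage (AWG q a b c d) 0 1 := by
        rw [circleAverage_fun_smul, circleAverage_zero_one_congr_inv, neg_one_smul]

theorem AWI_eq_circleAverage (q a b c d : ℂ) :
    AWI q a b c d = circleAverage (AWw q a b c d) 0 1 := by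
  simp only [AWI, circleAverage_eq_circleIntegral one_ne_zero, sub_zero, smul_eq_mul,
    div_eq_inv_mul]

theorem AWI_contiguous (hq : ‖q‖ < 1) (ha : ‖a‖ < 1) (hb : ‖b‖ < 1) (hc : ‖c‖ < 1)
    (hd : ‖d‖ < 1) :
    (1 - a * b) * (1 - a * c) * (1 - a * d) * AWI q a b c d =
      (1 - a * b * c * d) * AWI q (q * a) b c d := by
  have hint {f : ℂ → ℂ} (hf : ∀ z, ‖z‖ = 1 → DifferentiableAt ℂ f z) : CircleIntegrable f 0 1 :=
    ContinuousOn.circleIntegrable zero_le_one fun z hz =>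
      (hf z (by simpa using hz)).continuousAt.continuousWithinAt
  have hw (p : ℂ) : CircleIntegrable (fun z => p * AWw q a b c d z) 0 1 :=
    hint fun _ hz => (differentiableAt_AWw hq ha hb hc hd hz).const_mul p
  have hw' (p : ℂ) : CircleIntegrable (fun z => p * AWw q (q * a) b c d z) 0 1 :=
    hint fun _ hz => (differentiableAt_AWw hq (norm_mul_lt_one hq ha.le) hb hc hd hz).const_mul p
  have hG (z : ℂ) (hz : ‖z‖ = 1) : DifferentiableAt ℂ (AWG q a b c d) z :=
    differentiableAt_AWG hq ha hb hc hd (hz ▸ hq.le) hz.le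
  have hG' (z : ℂ) (hz : ‖z‖ = 1) : DifferentiableAt ℂ (fun y => AWG q a b c d y⁻¹) z :=
    (hG z⁻¹ (by simp [hz])).comp z (differentiableAt_inv (norm_ne_zero_iff.1 (by simp [hz])))
  refine sub_eq_zero.1 ?_
  calc (1 - a * b) * (1 - a * c) * (1 - a * d) * AWI q a b c d -
        (1 - a * b * c * d) * AWI q (q * a) b c d
      = circleAverage (fun z => (1 - a * b) * (1 - a * c) * (1 - a * d) * AWw q a b c d z -
          (1 - a * b * c * d) * AWw q (q * a) b c d z) 0 1 := by
        rw [circleAverage_fun_sub (hw _) (hw' _), circleAverage_const_mul, circleAverage_const_mul,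
          AWI_eq_circleAverage, AWI_eq_circleAverage]
    _ = circleAverage (fun z => a * (AWG q a b c d z + AWG q a b c d z⁻¹)) 0 1 :=
        circleAverage_congr_sphere fun z hz =>
          AWw_contiguous hq ha hb hc hd (by simpa using hz)
    _ = 0 := by
        rw [circleAverage_const_mul, circleAverage_fun_add (hint hG) (hint hG'),
          circleAverage_zero_one_congr_inv, circleAverage_AWG_eq_zero hq ha hb hc hd,
          add_zero, mul_zero]

theorem stmt17_general (q : ℂ) (hq : ‖q‖ < 1) (a b c d : ℂ)
    (hA : ‖a‖ < 1) (hB : ‖b‖ < 1) (hC : ‖c‖ < 1) (hD : ‖d‖ < 1) :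
    AWI q a b c d =
      (1 - a * b * c * d) / ((1 - a * b) * (1 - a * c) * (1 - a * d)) * AWI q (q * a) b c d := by
  have hne {x : ℂ} (hx : ‖x‖ < 1) : 1 - a * x ≠ 0 :=
    (isUnit_one_sub_of_norm_lt_one (norm_mul_lt_one hA hx.le)).ne_zero
  rw [div_mul_eq_mul_div, eq_div_iff (by simp [hne hB, hne hC, hne hD]), mul_comm,
    AWI_contiguous hq hA hB hC hD]

end ContiguousRelation

end AskeyWilson

/-- Contiguous relation for the Askey-Wilson integral:
`I_{a,b,c,d} = ((1-abcd)/((1-ab)(1-ac)(1-ad))) I_{qa,b,c,d}` for `|a|,|b|,|c|,|d|<1`. -/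
theorem stmt17 (q : ℝ) (hq0 : 0 < q) (hq1 : q < 1) (a b c d : ℂ)
    (hA : ‖a‖ < 1) (hB : ‖b‖ < 1) (hC : ‖c‖ < 1) (hD : ‖d‖ < 1) :
    AWI (q : ℂ) a b c d =
      (1 - a * b * c * d) / ((1 - a * b) * (1 - a * c) * (1 - a * d)) *
        AWI (q : ℂ) ((q : ℂ) * a) b c d :=
  stmt17_general q (by simpa [abs_of_pos hq0] using hq1) a b c d hA hB hC hD
end
end

section
/- (Orthogonality of Askey-Wilson polynomials) Let 0<q<1 and a,b,c,d∈ℂ with |a|,|b|,|c|,|d|<1. Then for all m,n∈ℤ_{≥0}: (1/(2π)) ∫_0^π p_n(cos θ; a,b,c,d | q) p_m(cos θ; a,b,c,d | q) w_{a,b,c,d}(e^{iθ}) dθ = δ_{m,n} h_n, where h_0 := (abcd;q)_∞ / (q, ab, ac, ad, bc, bd, cd;q)_∞ and for n≥1, h_n := h_0 · (1-q^{n-1}abcd)(q, ab, ac, ad, bc, bd, cd;q)_n / ((1-q^{2n-1}abcd)(abcd;q)_n). Moreover, if a,b,c,d are real, or if the non-real ones among them occur in complex-conjugate pairs, then the measure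 w_{a,b,c,d}(e^{iθ}) dθ on [0,π] is positive. -/
/-!
Let `L` be integration against the weight. Replacing a parameter `a` by `qa` multiplies the weight
by `(1 - az)(1 - a/z)`, so `L` maps `(az, a/z; q)_k (bz, b/z; q)_j` to the total mass with
parameters `aqᵏ, bqʲ, c, d`.

The total mass: with `s² = q`, the mean of an odd function over the circle `|z| = |s|` is moved to
`|z| = 1`, where it vanishes by symmetry. This gives the first moment of the weight, hence the
effect of `a ↦ qa` on the mass, which is the same as on `h_0`. By continuity at `0` the ratio of
the two does not depend on the parameters, and for `s, -s, q, -q` the weight reduces to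
`(1 - z²)(1 - z⁻²)`.

Expanding `p_n` in `(az, a/z; q)_k`, the value of `L` at `p_n · (bz, b/z; q)_j` becomes a
terminating basic hypergeometric sum. Such a sum is an `n`-fold q-difference; for `j < n` it is
taken of a polynomial of degree less than `n` and vanishes, and for `j = n` it is the
q-Pfaff-Saalschütz sum. If `b ≠ 0` the `(bz, b/z; q)_j` span all polynomials, so both the
orthogonality and the norms follow; the case `b = 0` is a limit.
-/

noncomputable section

/-- The Askey-Wilson polynomial `p_n(x; a,b,c,d | q)`, written with
`(ae^{iθ};q)_k (ae^{-iθ};q)_k = ∏_{j<k} (1 - 2aq^j x + a²q^{2j})`, `x = cos θ`. -/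
def awp (q a b c d : ℂ) (n : ℕ) (x : ℂ) : ℂ :=
  a ^ (-(n : ℤ)) * (qp q (a * b) n * qp q (a * c) n * qp q (a * d) n) *
    ∑ k ∈ Finset.range (n + 1),
      qp q (((q : ℂ) ^ n)⁻¹) k * qp q (q ^ ((n : ℤ) - 1) * (a * b * c * d)) k * q ^ k *
          (∏ j ∈ Finset.range k, (1 - 2 * a * q ^ j * x + a ^ 2 * q ^ (2 * j))) /
        (qp q (a * b) k * qp q (a * c) k * qp q (a * d) k * qp q q k)

/-- The quadratic norms `h_n` of the Askey-Wilson polynomials. -/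
def awh (q a b c d : ℂ) (n : ℕ) : ℂ :=
  (qpi q (a * b * c * d) /
      (qpi q q * qpi q (a * b) * qpi q (a * c) * qpi q (a * d) *
        qpi q (b * c) * qpi q (b * d) * qpi q (c * d))) *
    (if n = 0 then 1 else
      (1 - q ^ (n - 1) * (a * b * c * d)) *
          (qp q q n * qp q (a * b) n * qp q (a * c) n * qp q (a * d) n *
            qp q (b * c) n * qp q (b * d) n * qp q (c * d) n) /
        ((1 - q ^ (2 * n - 1) * (a * b * c * d)) * qp q (a * b * c * d) n))

open Finset Polynomial
open Real (circleAverage)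
open Metric (ball sphere)

namespace AskeyWilson

section CircleAverage

lemma ne_zero_of_mem_unitSphere {z : ℂ} (hz : z ∈ sphere (0 : ℂ) 1) : z ≠ 0 :=
  ne_zero_of_mem_sphere one_ne_zero ⟨z, hz⟩

lemma inv_mem_unitSphere {z : ℂ} (hz : z ∈ sphere (0 : ℂ) 1) : z⁻¹ ∈ sphere (0 : ℂ) 1 := by
  simp_all

lemma circleAverage_eq_of_differentiableOn_annulus {f : ℂ → ℂ} {c : ℂ} {r R : ℝ} (hr : 0 < r)
    (hrR : r ≤ R) (hf : ∀ z, r ≤ dist z c → dist z c ≤ R → DifferentiableAt ℂ f z) :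
    circleAverage f c R = circleAverage f c r := by
  rw [Real.circleAverage_eq_circleIntegral (hr.trans_le hrR).ne',
    Real.circleAverage_eq_circleIntegral hr.ne',
    Complex.circleIntegral_sub_center_inv_smul_eq_of_differentiable_on_annulus_off_countable hr hrR
      Set.countable_empty]
  · exact fun z hz ↦ (hf z (not_lt.1 hz.2) hz.1).continuousAt.continuousWithinAt
  · exact fun z hz ↦ hf z (not_le.1 hz.1.2).le (le_of_lt hz.1.1)

lemma circleAverage_comp_mul_left (f : ℂ → ℂ) (s : ℂ) :
    circleAverage (fun z ↦ f (s * z)) 0 1 = circleAverage f 0 ‖s‖ := by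
  rw [Real.circleAverage_eq_integral_add (f := f) s.arg, Real.circleAverage_def]
  congr! 4 with θ
  nth_rw 1 [← Complex.norm_mul_exp_arg_mul_I s]
  simp only [circleMap, zero_add, Complex.ofReal_one, Complex.ofReal_add, one_mul, add_mul,
    Complex.exp_add]
  ring

lemma circleAverage_eq_zero_of_inv_eq_neg {f : ℂ → ℂ} (hf : ∀ z, f z⁻¹ = -f z) :
    circleAverage f 0 1 = 0 := by
  have h : circleAverage (fun z ↦ -f z) 0 1 = circleAverage f 0 1 := by
    simp only [← hf, Real.circleAverage_zero_one_congr_inv]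
  rw [Real.circleAverage_def] at h ⊢
  rw [intervalIntegral.integral_neg, smul_neg] at h
  exact self_eq_neg.1 h.symm

lemma circleAverage_add_comp_inv {f : ℂ → ℂ} (hf : ContinuousOn f (sphere 0 1)) :
    circleAverage (fun z ↦ f z + f z⁻¹) 0 1 = 2 * circleAverage f 0 1 := by
  have hinv : ContinuousOn (fun z ↦ f z⁻¹) (sphere 0 1) :=
    hf.comp (continuousOn_inv₀.mono fun z hz ↦ ne_zero_of_mem_unitSphere hz)
      fun z hz ↦ inv_mem_unitSphere hz
  rw [Real.circleAverage_fun_add (hf.circleIntegrable zero_le_one)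
    (hinv.circleIntegrable zero_le_one), Real.circleAverage_zero_one_congr_inv, two_mul]

lemma circleAverage_eq_integral_zero_pi {f : ℂ → ℂ} (hf : ContinuousOn f (sphere 0 1))
    (hinv : ∀ z, f z⁻¹ = f z) :
    circleAverage f 0 1 =
      (Real.pi : ℂ)⁻¹ * ∫ θ in (0 : ℝ)..Real.pi, f (Complex.exp (θ * Complex.I)) := by
  have hcont : Continuous fun θ ↦ f (circleMap 0 1 θ) :=
    hf.comp_continuous (continuous_circleMap 0 1) fun θ ↦ circleMap_mem_sphere 0 zero_le_one θ
  have hupper : ∫ θ in Real.pi..2 * Real.pi, f (circleMap 0 1 θ) =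
      ∫ θ in (0 : ℝ)..Real.pi, f (circleMap 0 1 θ) := by
    have h := intervalIntegral.integral_comp_sub_left (a := 0) (b := Real.pi)
      (fun θ ↦ f (circleMap 0 1 θ)) (2 * Real.pi)
    rw [sub_zero, show 2 * Real.pi - Real.pi = Real.pi by ring] at h
    rw [← h]
    congr! 2 with θ
    rw [← hinv, circleMap_zero_inv, inv_one, neg_sub, ← periodic_circleMap, sub_add_cancel]
  rw [Real.circleAverage_def, ← intervalIntegral.integral_add_adjacent_intervals
    (hcont.intervalIntegrable 0 Real.pi) (hcont.intervalIntegrable Real.pi (2 * Real.pi)), hupper,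
    ← two_mul, Complex.real_smul, ← mul_assoc]
  congr 1
  · push_cast
    field_simp
  · simp only [circleMap, zero_add, Complex.ofReal_one, one_mul]

lemma continuousOn_circleAverage {X : Type*} [TopologicalSpace X] {F : X → ℂ → ℂ} {u : Set X}
    (hF : ContinuousOn (Function.uncurry F) (u ×ˢ sphere 0 1)) :
    ContinuousOn (fun x ↦ circleAverage (F x) 0 1) u := by
  rw [continuousOn_iff_continuous_domRestrict]
  refine Continuous.const_smul
    (intervalIntegral.continuous_parametric_intervalIntegral_of_continuous' ?_ _ _) _
  exact hF.comp_continuous (f := fun p : u × ℝ ↦ ((p.1 : X), circleMap 0 1 p.2)) (by fun_prop)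
    fun p ↦ ⟨p.1.2, circleMap_mem_sphere 0 zero_le_one p.2⟩

end CircleAverage

section QPochhammer

variable {q : ℂ}

lemma one_sub_ne_zero {x : ℂ} (hx : ‖x‖ < 1) : 1 - x ≠ 0 :=
  (isUnit_one_sub_of_norm_lt_one hx).ne_zero

lemma norm_mul_lt_one {x y : ℂ} (hx : ‖x‖ < 1) (hy : ‖y‖ ≤ 1) : ‖x * y‖ < 1 := by
  rw [norm_mul]
  exact mul_lt_one_of_nonneg_of_lt_one_left (norm_nonneg x) hx hy

lemma norm_mul_pow_lt_one {x : ℂ} (hq : ‖q‖ < 1) (hx : ‖x‖ < 1) (k : ℕ) : ‖x * q ^ k‖ < 1 :=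
  norm_mul_lt_one hx (by rw [norm_pow]; exact pow_le_one₀ (norm_nonneg q) hq.le)

lemma norm_pow_lt_one (hq : ‖q‖ < 1) {k : ℕ} (hk : k ≠ 0) : ‖q ^ k‖ < 1 := by
  rw [norm_pow]
  exact pow_lt_one₀ (norm_nonneg q) hq hk

lemma norm_neg_lt_one {x : ℂ} (hx : ‖x‖ < 1) : ‖-x‖ < 1 := by rwa [norm_neg]

lemma summable_norm_mul_pow (hq : ‖q‖ < 1) (x : ℂ) : Summable fun j : ℕ ↦ ‖-(x * q ^ j)‖ := by
  simp only [norm_neg, norm_mul, norm_pow]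
  exact (summable_geometric_of_lt_one (norm_nonneg q) hq).mul_left _

lemma multipliable_qpi (hq : ‖q‖ < 1) (x : ℂ) : Multipliable fun j : ℕ ↦ 1 - x * q ^ j := by
  simpa only [sub_eq_add_neg] using multipliable_one_add_of_summable (summable_norm_mul_pow hq x)

lemma qpi_eq_one_sub_mul (hq : ‖q‖ < 1) (x : ℂ) : qpi q x = (1 - x) * qpi q (q * x) := by
  have htail : (fun j : ℕ ↦ 1 - x * q ^ (j + 1)) = fun j ↦ 1 - q * x * q ^ j := by
    ext j
    ring
  rw [qpi, tprod_eq_zero_mul' (f := fun j : ℕ ↦ 1 - x * q ^ j)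
    (htail ▸ multipliable_qpi hq (q * x)), htail, pow_zero, mul_one, qpi]

lemma qpi_ne_zero (hq : ‖q‖ < 1) {x : ℂ} (hx : ‖x‖ < 1) : qpi q x ≠ 0 := by
  simpa only [qpi, sub_eq_add_neg] using tprod_one_add_ne_zero_of_summable
    (fun j ↦ by simpa only [← sub_eq_add_neg] using one_sub_ne_zero (norm_mul_pow_lt_one hq hx j))
    (summable_norm_mul_pow hq x)

lemma differentiable_qpi (hq : ‖q‖ < 1) : Differentiable ℂ (qpi q) := by
  have hprod : HasProdLocallyUniformlyOn (fun (j : ℕ) (x : ℂ) ↦ 1 + -(x * q ^ j))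
      (fun x ↦ ∏' j : ℕ, (1 + -(x * q ^ j))) Set.univ := by
    refine hasProdLocallyUniformlyOn_of_forall_compact isOpen_univ fun K _ hK ↦ ?_
    obtain ⟨M, hM⟩ := hK.isBounded.exists_norm_le
    refine ((summable_geometric_of_lt_one (norm_nonneg q) hq).mul_left M)
      |>.hasProdUniformlyOn_nat_one_add hK (.of_forall fun j x hx ↦ ?_) fun _ ↦ by fun_prop
    rw [norm_neg, norm_mul, norm_pow]
    gcongr
    exact hM x hx
  have hdiff := hprod.differentiableOn (.of_forall fun _ ↦ by
    simpa [Finset.prod_fn] using DifferentiableOn.finsetProd fun _ _ ↦ by fun_prop) isOpen_univ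
  rw [differentiableOn_univ] at hdiff
  simpa [qpi, sub_eq_add_neg, funext_iff] using! hdiff

lemma continuous_qpi (hq : ‖q‖ < 1) : Continuous (qpi q) := (differentiable_qpi hq).continuous

lemma qpi_mul_qpi_neg (hq : ‖q‖ < 1) (x : ℂ) :
    qpi q x * qpi q (-x) = qpi (q ^ 2) (x ^ 2) := by
  rw [qpi, qpi, ← (multipliable_qpi hq x).tprod_mul (multipliable_qpi hq (-x)), qpi]
  exact tprod_congr fun j ↦ by ring

lemma qpi_eq_even_mul_odd (hq : ‖q‖ < 1) (x : ℂ) :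
    qpi q x = qpi (q ^ 2) x * qpi (q ^ 2) (q * x) := by
  have heven (j : ℕ) : 1 - x * q ^ (2 * j) = 1 - x * (q ^ 2) ^ j := by rw [pow_mul]
  have hodd (j : ℕ) : 1 - x * q ^ (2 * j + 1) = 1 - q * x * (q ^ 2) ^ j := by
    rw [← pow_mul]
    ring
  have hq2 : ‖q ^ 2‖ < 1 := norm_pow_lt_one hq two_ne_zero
  simp only [qpi, ← heven, ← hodd]
  refine (tprod_even_mul_odd (f := fun j : ℕ ↦ 1 - x * q ^ j) ?_ ?_).symm
  · simpa only [heven] using multipliable_qpi hq2 x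
  · simpa only [hodd] using multipliable_qpi hq2 (q * x)

lemma qpi_neg_mul_qpi_sq_eq_one (hq : ‖q‖ < 1) : qpi q (-q) * qpi (q ^ 2) q = 1 := by
  have hsplit := qpi_eq_even_mul_odd hq q
  rw [← sq, ← qpi_mul_qpi_neg hq] at hsplit
  apply mul_left_cancel₀ (qpi_ne_zero hq hq)
  linear_combination -hsplit

lemma qpi_sq_eq_mul_of_sq_eq (hq : ‖q‖ < 1) {s : ℂ} (hs : s ^ 2 = q) (x : ℂ) :
    qpi q (q * x ^ 2) = qpi q (s * x) * qpi q (-s * x) * (qpi q (q * x) * qpi q (-q * x)) := by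
  rw [neg_mul, neg_mul, qpi_mul_qpi_neg hq, qpi_mul_qpi_neg hq, qpi_eq_even_mul_odd hq]
  congr 2 <;> rw [← hs] <;> ring

lemma conj_qpi (hq : ‖q‖ < 1) (x : ℂ) :
    starRingEnd ℂ (qpi q x) = qpi (starRingEnd ℂ q) (starRingEnd ℂ x) := by
  rw [qpi, (multipliable_qpi hq x).map_tprod (starRingEnd ℂ) Complex.continuous_conj, qpi]
  exact tprod_congr fun j ↦ by simp only [map_sub, map_one, map_mul, map_pow]

end QPochhammer

section Weight

variable {q : ℂ} {T : Multiset ℂ}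

/-- The product `(tz, t/z; q)_∞`, of which the Askey-Wilson weight is built. -/
def qpiPair (q t z : ℂ) : ℂ := qpi q (t * z) * qpi q (t * z⁻¹)

lemma qpiPair_inv (q t z : ℂ) : qpiPair q t z⁻¹ = qpiPair q t z := by
  rw [qpiPair, inv_inv, mul_comm, qpiPair]

lemma qpiPair_eq_mul (hq : ‖q‖ < 1) (t z : ℂ) :
    qpiPair q t z = (1 - t * z) * (1 - t * z⁻¹) * qpiPair q (q * t) z := by
  rw [qpiPair, qpi_eq_one_sub_mul hq (t * z), qpi_eq_one_sub_mul hq (t * z⁻¹), qpiPair,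
    mul_assoc q, mul_assoc q]
  ring

lemma qpiPair_ne_zero (hq : ‖q‖ < 1) {t z : ℂ} (h : ‖t * z‖ < 1) (h' : ‖t * z⁻¹‖ < 1) :
    qpiPair q t z ≠ 0 :=
  mul_ne_zero (qpi_ne_zero hq h) (qpi_ne_zero hq h')

lemma qpiPair_ne_zero_of_mem_unitSphere (hq : ‖q‖ < 1) {t z : ℂ} (ht : ‖t‖ < 1)
    (hz : z ∈ sphere (0 : ℂ) 1) : qpiPair q t z ≠ 0 :=
  qpiPair_ne_zero hq (norm_mul_lt_one ht (mem_sphere_zero_iff_norm.1 hz).le)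
    (norm_mul_lt_one ht (mem_sphere_zero_iff_norm.1 (inv_mem_unitSphere hz)).le)

lemma continuousOn_qpiPair (hq : ‖q‖ < 1) :
    ContinuousOn (fun p : ℂ × ℂ ↦ qpiPair q p.1 p.2) (Set.univ ×ˢ {0}ᶜ) := by
  have hinv : ContinuousOn (fun p : ℂ × ℂ ↦ p.2⁻¹) (Set.univ ×ˢ {0}ᶜ) :=
    continuousOn_snd.inv₀ fun p hp ↦ hp.2
  have hqpi := continuous_qpi hq
  exact (hqpi.comp (by fun_prop)).continuousOn.mul
    (hqpi.comp_continuousOn (continuousOn_fst.mul hinv))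

lemma differentiableAt_qpiPair (hq : ‖q‖ < 1) (t : ℂ) {z : ℂ} (hz : z ≠ 0) :
    DifferentiableAt ℂ (qpiPair q t) z := by
  have hqpi (x : ℂ) : DifferentiableAt ℂ (qpi q) x := (differentiable_qpi hq).differentiableAt
  exact ((hqpi _).comp z (by fun_prop)).mul ((hqpi _).comp z (by fun_prop))

lemma one_sub_mul_qpiPair_sqrt (hq : ‖q‖ < 1) {s : ℂ} (hs0 : s ≠ 0) (hs : s ^ 2 = q) (t z : ℂ) :
    (1 - t * z) * qpiPair q (s * t) (s * z) = qpiPair q t z := by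
  have hz : s * t * (s * z) = q * (t * z) := by rw [← hs]; ring
  have hz' : s * t * (s * z)⁻¹ = t * z⁻¹ := by rw [mul_inv]; field_simp
  rw [qpiPair, qpiPair, hz, hz', qpi_eq_one_sub_mul hq (t * z), mul_assoc]

lemma one_sub_mul_qpiPair_self_sqrt (hq : ‖q‖ < 1) (hq0 : q ≠ 0) {s : ℂ} (hs : s ^ 2 = q) (z : ℂ) :
    (1 - q * z ^ 2) * qpiPair q q ((s * z) ^ 2) = (1 - z⁻¹ ^ 2) * qpiPair q q (z ^ 2) := by
  have hz : q * (s * z) ^ 2 = q * (q * z ^ 2) := by rw [mul_pow, hs]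
  have hz' : q * ((s * z) ^ 2)⁻¹ = z⁻¹ ^ 2 := by rw [mul_pow, hs, mul_inv, inv_pow]; field_simp
  rw [qpiPair, qpiPair, hz, hz', qpi_eq_one_sub_mul hq (q * z ^ 2), qpi_eq_one_sub_mul hq (z⁻¹ ^ 2),
    inv_pow]
  ring

/-- The quotient `(qz², qz⁻²; q)_∞ / ∏_{t ∈ T} (tz, t/z; q)_∞`: the weight of the parameters `T`
without the factors of its numerator that vanish at `z = ±1`. -/
def reducedWeight (q : ℂ) (T : Multiset ℂ) (z : ℂ) : ℂ :=
  qpiPair q q (z ^ 2) / (T.map fun t ↦ qpiPair q t z).prod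

/-- The weight `(z², z⁻²; q)_∞ / ∏_{t ∈ T} (tz, t/z; q)_∞` with any number of parameters. -/
def weight (q : ℂ) (T : Multiset ℂ) (z : ℂ) : ℂ :=
  (1 - z ^ 2) * (1 - z⁻¹ ^ 2) * reducedWeight q T z

lemma weight_eq_div (hq : ‖q‖ < 1) (T : Multiset ℂ) (z : ℂ) :
    weight q T z = qpiPair q 1 (z ^ 2) / (T.map fun t ↦ qpiPair q t z).prod := by
  rw [qpiPair_eq_mul hq, weight, reducedWeight, mul_one, inv_pow, one_mul, one_mul, mul_div_assoc]

lemma AWw_eq_weight (hq : ‖q‖ < 1) (a b c d z : ℂ) :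
    AWw q a b c d z = weight q {a, b, c, d} z := by
  rw [weight_eq_div hq, AWw]
  simp only [qpiPair, Multiset.insert_eq_cons, Multiset.map_cons, Multiset.map_singleton,
    Multiset.prod_cons, Multiset.prod_singleton, one_mul, inv_pow]
  congr 1
  ring

lemma reducedWeight_zero (q z : ℂ) : reducedWeight q 0 z = qpiPair q q (z ^ 2) := by
  rw [reducedWeight, Multiset.map_zero, Multiset.prod_zero, div_one]

lemma reducedWeight_inv (q : ℂ) (T : Multiset ℂ) (z : ℂ) :
    reducedWeight q T z⁻¹ = reducedWeight q T z := by
  simp only [reducedWeight, qpiPair_inv, inv_pow]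

lemma reducedWeight_cons (q t : ℂ) (T : Multiset ℂ) (z : ℂ) :
    reducedWeight q (t ::ₘ T) z = reducedWeight q T z / qpiPair q t z := by
  rw [reducedWeight, Multiset.map_cons, Multiset.prod_cons, mul_comm (qpiPair q t z), ← div_div,
    reducedWeight]

lemma weight_inv (q : ℂ) (T : Multiset ℂ) (z : ℂ) : weight q T z⁻¹ = weight q T z := by
  rw [weight, inv_inv, reducedWeight_inv, mul_comm (1 - _), weight]

lemma weight_cons (q t : ℂ) (T : Multiset ℂ) (z : ℂ) :
    weight q (t ::ₘ T) z = weight q T z / qpiPair q t z := by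
  rw [weight, reducedWeight_cons, weight, mul_div_assoc]

lemma weight_mul_cons (hq : ‖q‖ < 1) {t z : ℂ} (ht : ‖t‖ < 1) (T : Multiset ℂ)
    (hz : z ∈ sphere (0 : ℂ) 1) :
    weight q (q * t ::ₘ T) z = (1 - t * z) * (1 - t * z⁻¹) * weight q (t ::ₘ T) z := by
  have hne := qpiPair_ne_zero_of_mem_unitSphere hq ht hz
  rw [qpiPair_eq_mul hq] at hne
  rw [weight_cons, weight_cons, qpiPair_eq_mul hq t, ← mul_div_assoc,
    mul_div_mul_left _ _ (left_ne_zero_of_mul hne)]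

lemma differentiableAt_reducedWeight (hq : ‖q‖ < 1) {z : ℂ} (hz : z ≠ 0)
    (hT : ∀ t ∈ T, ‖t * z‖ < 1 ∧ ‖t * z⁻¹‖ < 1) :
    DifferentiableAt ℂ (reducedWeight q T) z := by
  have hnum : DifferentiableAt ℂ (fun z ↦ qpiPair q q (z ^ 2)) z :=
    (differentiableAt_qpiPair hq q (pow_ne_zero 2 hz)).comp z (differentiableAt_pow 2)
  induction T using Multiset.induction_on with
  | empty => simpa only [funext (reducedWeight_zero q)] using hnum
  | cons t T ih =>
    obtain ⟨ht, ht'⟩ := hT t (Multiset.mem_cons_self t T)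
    rw [funext (reducedWeight_cons q t T)]
    exact (ih fun u hu ↦ hT u (Multiset.mem_cons_of_mem hu)).div
      (differentiableAt_qpiPair hq t hz) (qpiPair_ne_zero hq ht ht')

lemma continuousOn_reducedWeight (hq : ‖q‖ < 1) (hT : ∀ t ∈ T, ‖t‖ < 1) :
    ContinuousOn (reducedWeight q T) (sphere 0 1) := fun _ hz ↦
  (differentiableAt_reducedWeight hq (ne_zero_of_mem_unitSphere hz) fun t ht ↦
    ⟨norm_mul_lt_one (hT t ht) (mem_sphere_zero_iff_norm.1 hz).le, norm_mul_lt_one (hT t ht)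
      (mem_sphere_zero_iff_norm.1 (inv_mem_unitSphere hz)).le⟩).continuousAt.continuousWithinAt

lemma continuousOn_inv_unitSphere : ContinuousOn (fun z : ℂ ↦ z⁻¹) (sphere 0 1) :=
  continuousOn_inv₀.mono fun _ hz ↦ ne_zero_of_mem_unitSphere hz

lemma continuousOn_weight (hq : ‖q‖ < 1) (hT : ∀ t ∈ T, ‖t‖ < 1) :
    ContinuousOn (weight q T) (sphere 0 1) := by
  have hinv := continuousOn_inv_unitSphere
  have hred := continuousOn_reducedWeight hq hT
  unfold weight
  fun_prop

/-- The function whose values at `z` and `z⁻¹` add up, for four parameters, to the weight times a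
polynomial of degree one in `x = (z + 1/z)/2`. -/
def halfMoment (q : ℂ) (T : Multiset ℂ) (z : ℂ) : ℂ :=
  z⁻¹ * (1 - z⁻¹ ^ 2) * (T.map fun t ↦ 1 - t * z).prod * reducedWeight q T z

lemma continuousOn_halfMoment (hq : ‖q‖ < 1) (hT : ∀ t ∈ T, ‖t‖ < 1) :
    ContinuousOn (halfMoment q T) (sphere 0 1) := by
  have hinv := continuousOn_inv_unitSphere
  have hred := continuousOn_reducedWeight hq hT
  have hprod : Continuous fun z ↦ (T.map fun t ↦ 1 - t * z).prod :=
    continuous_multiset_prod _ fun t _ ↦ by fun_prop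
  exact ((hinv.mul (by fun_prop)).mul hprod.continuousOn).mul hred

lemma mul_reducedWeight_sqrt (hq : ‖q‖ < 1) (hq0 : q ≠ 0) {s : ℂ} (hs : s ^ 2 = q)
    (hT : ∀ t ∈ T, ‖t‖ < 1) {z : ℂ} (hz : z ∈ sphere (0 : ℂ) 1) :
    s * (((s * z)⁻¹ - s * z) * reducedWeight q (T.map (s * ·)) (s * z)) = halfMoment q T z := by
  have hs0 : s ≠ 0 := ne_zero_pow two_ne_zero (hs.trans_ne hq0)
  have hz0 := ne_zero_of_mem_unitSphere hz
  have hden : (T.map fun t ↦ 1 - t * z).prod *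
      (T.map fun t ↦ qpiPair q (s * t) (s * z)).prod = (T.map fun t ↦ qpiPair q t z).prod := by
    simp only [← Multiset.prod_map_mul, one_sub_mul_qpiPair_sqrt hq hs0 hs]
  have hne : (T.map fun t ↦ 1 - t * z).prod ≠ 0 := by
    refine Multiset.prod_ne_zero fun h ↦ ?_
    obtain ⟨t, ht, h0⟩ := Multiset.mem_map.1 h
    exact one_sub_ne_zero (norm_mul_lt_one (hT t ht) (mem_sphere_zero_iff_norm.1 hz).le) h0
  have hfront : s * ((s * z)⁻¹ - s * z) = z⁻¹ * (1 - q * z ^ 2) := by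
    rw [← hs]
    field_simp
  rw [← mul_assoc, hfront, halfMoment, reducedWeight, reducedWeight, Multiset.map_map]
  simp only [Function.comp_def]
  rw [← mul_div_assoc, mul_assoc, one_sub_mul_qpiPair_self_sqrt hq hq0 hs, ← hden, ← mul_div_assoc,
    ← mul_div_mul_left _ _ hne]
  ring

lemma exists_sq_eq_and_norm_lt_one (hq : ‖q‖ < 1) : ∃ s : ℂ, s ^ 2 = q ∧ ‖s‖ < 1 := by
  obtain ⟨s, rfl⟩ := IsAlgClosed.exists_pow_nat_eq q two_pos
  rw [norm_pow, pow_lt_one_iff_of_nonneg (norm_nonneg s) two_ne_zero] at hq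
  exact ⟨s, rfl, hq⟩

/- With `s² = q`, the reduced weight of the parameters `st` times `z⁻¹ - z` is odd under `z ↦ z⁻¹`
and holomorphic on `|s| ≤ |z| ≤ 1`, and on the inner circle it becomes the half moment. -/
lemma circleAverage_halfMoment (hq : ‖q‖ < 1) (hq0 : q ≠ 0) (hT : ∀ t ∈ T, ‖t‖ < 1) :
    circleAverage (halfMoment q T) 0 1 = 0 := by
  obtain ⟨s, hs, hs1⟩ := exists_sq_eq_and_norm_lt_one hq
  have hs0 : 0 < ‖s‖ := norm_pos_iff.2 (ne_zero_pow two_ne_zero (hs.trans_ne hq0))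
  set G : ℂ → ℂ := fun z ↦ (z⁻¹ - z) * reducedWeight q (T.map (s * ·)) z with hG
  have hodd (z : ℂ) : G z⁻¹ = -G z := by
    rw [hG]
    simp only [inv_inv, reducedWeight_inv]
    ring
  have hdiff (z : ℂ) (hz : ‖s‖ ≤ dist z 0) (hz' : dist z 0 ≤ 1) : DifferentiableAt ℂ G z := by
    rw [dist_zero_right] at hz hz'
    have hz0 : z ≠ 0 := norm_pos_iff.1 (hs0.trans_le hz)
    refine ((differentiableAt_inv hz0).sub differentiableAt_id).mul
      (differentiableAt_reducedWeight hq hz0 fun u hu ↦ ?_)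
    obtain ⟨t, ht, rfl⟩ := Multiset.mem_map.1 hu
    rw [mul_comm s t, mul_assoc, mul_assoc]
    refine ⟨norm_mul_lt_one (hT t ht) (norm_mul_lt_one hs1 hz').le,
      norm_mul_lt_one (hT t ht) ?_⟩
    rw [norm_mul, norm_inv]
    exact mul_inv_le_one_of_le₀ hz (norm_nonneg z)
  calc circleAverage (halfMoment q T) 0 1
      = circleAverage (fun z ↦ s • G (s * z)) 0 1 :=
        Real.circleAverage_congr_sphere fun z hz ↦
          (mul_reducedWeight_sqrt hq hq0 hs hT (by rwa [abs_one] at hz)).symm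
    _ = s * circleAverage G 0 ‖s‖ := by
        rw [Real.circleAverage_fun_smul, circleAverage_comp_mul_left, smul_eq_mul]
    _ = 0 := by
        rw [← circleAverage_eq_of_differentiableOn_annulus hs0 hs1.le hdiff,
          circleAverage_eq_zero_of_inv_eq_neg hodd, mul_zero]

lemma halfMoment_add_inv (q a b c d : ℂ) {z : ℂ} (hz : z ≠ 0) :
    halfMoment q {a, b, c, d} z + halfMoment q {a, b, c, d} z⁻¹ =
      ((1 - a * b * c * d) * (z + z⁻¹) -
        (a + b + c + d - (a * b * c + a * b * d + a * c * d + b * c * d))) *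
        weight q {a, b, c, d} z := by
  simp only [halfMoment, weight, reducedWeight_inv, Multiset.insert_eq_cons, Multiset.map_cons,
    Multiset.map_singleton, Multiset.prod_cons, Multiset.prod_singleton]
  field_simp
  ring

end Weight

section MomentFunctional

variable {q : ℂ} {T : Multiset ℂ}

/-- The moment functional `f ↦ (2π)⁻¹ ∫_0^π f(cos θ) w(e^{iθ}) dθ` of the weight with parameters
`T`, written as half the mean over the whole unit circle. -/
def momentFunctional (q : ℂ) (T : Multiset ℂ) (f : ℂ[X]) : ℂ :=
  2⁻¹ * circleAverage (fun z ↦ f.eval ((z + z⁻¹) / 2) * weight q T z) 0 1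

lemma continuousOn_eval_mul_weight (hq : ‖q‖ < 1) (hT : ∀ t ∈ T, ‖t‖ < 1) (f : ℂ[X]) :
    ContinuousOn (fun z ↦ f.eval ((z + z⁻¹) / 2) * weight q T z) (sphere 0 1) := by
  have hinv := continuousOn_inv_unitSphere
  have hw := continuousOn_weight hq hT
  fun_prop

lemma isLinearMap_momentFunctional (hq : ‖q‖ < 1) (hT : ∀ t ∈ T, ‖t‖ < 1) :
    IsLinearMap ℂ (momentFunctional q T) where
  map_add f g := by
    simp only [momentFunctional, eval_add, add_mul]
    rw [Real.circleAverage_fun_add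
      ((continuousOn_eval_mul_weight hq hT f).circleIntegrable zero_le_one)
      ((continuousOn_eval_mul_weight hq hT g).circleIntegrable zero_le_one), mul_add]
  map_smul r f := by
    simp only [momentFunctional, eval_smul, smul_mul_assoc]
    rw [Real.circleAverage_fun_smul, mul_smul_comm]

lemma momentFunctional_eq_integral (hq : ‖q‖ < 1) (hT : ∀ t ∈ T, ‖t‖ < 1) (f : ℂ[X]) :
    momentFunctional q T f = (2 * (Real.pi : ℂ))⁻¹ * ∫ θ in (0 : ℝ)..Real.pi,
      f.eval (Real.cos θ : ℂ) * weight q T (Complex.exp (θ * Complex.I)) := by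
  rw [momentFunctional, circleAverage_eq_integral_zero_pi (continuousOn_eval_mul_weight hq hT f)
    fun z ↦ by rw [inv_inv, add_comm, weight_inv], ← mul_assoc, mul_inv]
  simp only [← Complex.exp_neg, ← neg_mul, Complex.ofReal_cos, Complex.cos]

/-- The polynomial `(1 - tz)(1 - t/z)` in `x = (z + 1/z)/2`. -/
def pairFactor (t : ℂ) : ℂ[X] := C (1 + t ^ 2) - C (2 * t) * X

lemma eval_pairFactor (t : ℂ) {z : ℂ} (hz : z ≠ 0) :
    (pairFactor t).eval ((z + z⁻¹) / 2) = (1 - t * z) * (1 - t * z⁻¹) := by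
  simp only [pairFactor, eval_sub, eval_mul, eval_C, eval_X]
  field_simp
  ring

lemma momentFunctional_mul_cons (hq : ‖q‖ < 1) {t : ℂ} (ht : ‖t‖ < 1) (T : Multiset ℂ) (f : ℂ[X]) :
    momentFunctional q (q * t ::ₘ T) f = momentFunctional q (t ::ₘ T) (pairFactor t * f) := by
  rw [momentFunctional, momentFunctional]
  congr 1
  refine Real.circleAverage_congr_sphere fun z hz ↦ ?_
  rw [abs_one] at hz
  rw [weight_mul_cons hq ht T hz, eval_mul, eval_pairFactor t (ne_zero_of_mem_unitSphere hz)]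
  ring

lemma continuousOn_momentFunctional_cons (hq : ‖q‖ < 1) (hT : ∀ t ∈ T, ‖t‖ < 1) {f : ℂ → ℂ[X]}
    (hf : ContinuousOn (fun p : ℂ × ℂ ↦ (f p.1).eval p.2) (ball 0 1 ×ˢ Set.univ)) :
    ContinuousOn (fun t ↦ momentFunctional q (t ::ₘ T) (f t)) (ball 0 1) := by
  have hinv : ContinuousOn (fun p : ℂ × ℂ ↦ p.2⁻¹) (ball 0 1 ×ˢ sphere 0 1) :=
    continuousOn_inv_unitSphere.comp continuousOn_snd fun p hp ↦ hp.2
  have heval : ContinuousOn (fun p : ℂ × ℂ ↦ (f p.1).eval ((p.2 + p.2⁻¹) / 2))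
      (ball 0 1 ×ˢ sphere 0 1) :=
    hf.comp (f := fun p : ℂ × ℂ ↦ (p.1, (p.2 + p.2⁻¹) / 2)) (by fun_prop)
      fun p hp ↦ ⟨hp.1, Set.mem_univ _⟩
  have hw : ContinuousOn (fun p : ℂ × ℂ ↦ weight q T p.2) (ball 0 1 ×ˢ sphere 0 1) :=
    (continuousOn_weight hq hT).comp continuousOn_snd fun p hp ↦ hp.2
  have hpair : ContinuousOn (fun p : ℂ × ℂ ↦ qpiPair q p.1 p.2) (ball 0 1 ×ˢ sphere 0 1) :=
    (continuousOn_qpiPair hq).mono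
      (Set.prod_mono (Set.subset_univ _) fun z hz ↦ ne_zero_of_mem_unitSphere hz)
  refine (continuousOn_circleAverage ?_).const_mul _
  simp only [weight_cons]
  exact heval.mul (hw.div hpair fun p hp ↦ qpiPair_ne_zero_of_mem_unitSphere hq
    (mem_ball_zero_iff.1 hp.1) hp.2)

end MomentFunctional

section FourParameters

variable {q a b c d : ℂ}

lemma forall_mem_norm_lt_one (hA : ‖a‖ < 1) (hB : ‖b‖ < 1) (hC : ‖c‖ < 1) (hD : ‖d‖ < 1) :
    ∀ t ∈ ({a, b, c, d} : Multiset ℂ), ‖t‖ < 1 := by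
  simp [hA, hB, hC, hD]

lemma rotate_parameters (a b c d : ℂ) : ({b, c, d, a} : Multiset ℂ) = {a, b, c, d} := by
  simp only [Multiset.insert_eq_cons, ← Multiset.singleton_add]
  ac_rfl

lemma momentFunctional_first_moment (hq : ‖q‖ < 1) (hq0 : q ≠ 0) (hA : ‖a‖ < 1) (hB : ‖b‖ < 1)
    (hC : ‖c‖ < 1) (hD : ‖d‖ < 1) :
    momentFunctional q {a, b, c, d} (C (2 * (1 - a * b * c * d)) * X -
      C (a + b + c + d - (a * b * c + a * b * d + a * c * d + b * c * d))) = 0 := by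
  have hT := forall_mem_norm_lt_one hA hB hC hD
  have hsymm := circleAverage_add_comp_inv (continuousOn_halfMoment hq hT)
  rw [circleAverage_halfMoment hq hq0 hT, mul_zero] at hsymm
  refine mul_eq_zero_of_right _ ((Real.circleAverage_congr_sphere fun z hz ↦ ?_).trans hsymm)
  rw [abs_one] at hz
  simp only [halfMoment_add_inv q a b c d (ne_zero_of_mem_unitSphere hz), eval_sub, eval_mul,
    eval_C, eval_X]
  ring

/- Every polynomial of degree one, in particular `(1 - az)(1 - a/z)`, integrates against the weight
to a multiple of the total mass. -/
lemma momentFunctional_one_shift (hq : ‖q‖ < 1) (hq0 : q ≠ 0) (hA : ‖a‖ < 1) (hB : ‖b‖ < 1)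
    (hC : ‖c‖ < 1) (hD : ‖d‖ < 1) :
    (1 - a * b * c * d) * momentFunctional q {q * a, b, c, d} 1 =
      (1 - a * b) * (1 - a * c) * (1 - a * d) * momentFunctional q {a, b, c, d} 1 := by
  have hL := isLinearMap_momentFunctional hq (forall_mem_norm_lt_one hA hB hC hD)
  have hfactor : (1 - a * b * c * d) • pairFactor a -
      ((1 - a * b) * (1 - a * c) * (1 - a * d)) • (1 : ℂ[X]) =
      (-a) • (C (2 * (1 - a * b * c * d)) * X -
        C (a + b + c + d - (a * b * c + a * b * d + a * c * d + b * c * d))) := by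
    simp only [pairFactor, smul_eq_C_mul, map_add, map_sub, map_mul, map_neg, map_pow, map_one,
      map_ofNat]
    ring
  have h := congrArg (momentFunctional q {a, b, c, d}) hfactor
  rw [hL.map_sub, hL.map_smul, hL.map_smul, hL.map_smul,
    momentFunctional_first_moment hq hq0 hA hB hC hD, smul_zero] at h
  simp only [Multiset.insert_eq_cons] at h ⊢
  rw [momentFunctional_mul_cons hq hA, mul_one]
  exact sub_eq_zero.1 h

lemma awh_zero (q a b c d : ℂ) :
    awh q a b c d 0 = qpi q (a * b * c * d) /
      (qpi q q * qpi q (a * b) * qpi q (a * c) * qpi q (a * d) *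
        qpi q (b * c) * qpi q (b * d) * qpi q (c * d)) := by
  rw [awh, if_pos rfl, mul_one]

lemma awh_zero_shift (hq : ‖q‖ < 1) (hA : ‖a‖ < 1) (hB : ‖b‖ < 1) (hC : ‖c‖ < 1) (hD : ‖d‖ < 1) :
    (1 - a * b * c * d) * awh q (q * a) b c d 0 =
      (1 - a * b) * (1 - a * c) * (1 - a * d) * awh q a b c d 0 := by
  have hab := one_sub_ne_zero (norm_mul_lt_one hA hB.le)
  have hac := one_sub_ne_zero (norm_mul_lt_one hA hC.le)
  have had := one_sub_ne_zero (norm_mul_lt_one hA hD.le)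
  rw [awh_zero, awh_zero, qpi_eq_one_sub_mul hq (a * b * c * d), qpi_eq_one_sub_mul hq (a * b),
    qpi_eq_one_sub_mul hq (a * c), qpi_eq_one_sub_mul hq (a * d)]
  simp only [← mul_assoc]
  field_simp

lemma awh_zero_ne_zero (hq : ‖q‖ < 1) (hA : ‖a‖ < 1) (hB : ‖b‖ < 1) (hC : ‖c‖ < 1)
    (hD : ‖d‖ < 1) : awh q a b c d 0 ≠ 0 := by
  have hne {x y : ℂ} (hx : ‖x‖ < 1) (hy : ‖y‖ < 1) : qpi q (x * y) ≠ 0 :=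
    qpi_ne_zero hq (norm_mul_lt_one hx hy.le)
  have habc := norm_mul_lt_one (norm_mul_lt_one hA hB.le) hC.le
  simp [awh_zero, qpi_ne_zero hq hq, hne habc hD, hne hA hB, hne hA hC, hne hA hD, hne hB hC,
    hne hB hD, hne hC hD]

lemma awh_zero_rotate (q a b c d : ℂ) : awh q b c d a 0 = awh q a b c d 0 := by
  rw [awh_zero, awh_zero, show b * c * d * a = a * b * c * d by ring, mul_comm b a, mul_comm c a,
    mul_comm d a]
  congr 1
  ring

/-- The total mass of the weight relative to its expected value `h_0`. -/
def massRatio (q a b c d : ℂ) : ℂ := momentFunctional q {a, b, c, d} 1 / awh q a b c d 0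

lemma massRatio_rotate (q a b c d : ℂ) : massRatio q b c d a = massRatio q a b c d := by
  rw [massRatio, rotate_parameters, awh_zero_rotate, massRatio]

lemma massRatio_shift (hq : ‖q‖ < 1) (hq0 : q ≠ 0) (hA : ‖a‖ < 1) (hB : ‖b‖ < 1)
    (hC : ‖c‖ < 1) (hD : ‖d‖ < 1) : massRatio q (q * a) b c d = massRatio q a b c d := by
  have hab := one_sub_ne_zero (norm_mul_lt_one hA hB.le)
  have hac := one_sub_ne_zero (norm_mul_lt_one hA hC.le)
  have had := one_sub_ne_zero (norm_mul_lt_one hA hD.le)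
  have habcd := one_sub_ne_zero
    (norm_mul_lt_one (norm_mul_lt_one (norm_mul_lt_one hA hB.le) hC.le) hD.le)
  rw [massRatio, ← mul_div_mul_left _ _ habcd, momentFunctional_one_shift hq hq0 hA hB hC hD,
    awh_zero_shift hq hA hB hC hD, mul_div_mul_left _ _ (mul_ne_zero (mul_ne_zero hab hac) had),
    massRatio]

lemma continuousOn_awh_zero (hq : ‖q‖ < 1) (hB : ‖b‖ < 1) (hC : ‖c‖ < 1) (hD : ‖d‖ < 1) :
    ContinuousOn (fun a ↦ awh q a b c d 0) (ball 0 1) := by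
  have hqpi := continuous_qpi hq
  have hne {x y : ℂ} (hx : x ∈ ball (0 : ℂ) 1) (hy : ‖y‖ < 1) : qpi q (x * y) ≠ 0 :=
    qpi_ne_zero hq (norm_mul_lt_one (mem_ball_zero_iff.1 hx) hy.le)
  simp only [awh_zero]
  refine ContinuousOn.div (by fun_prop) (by fun_prop) fun a ha ↦ ?_
  have hbc := qpi_ne_zero hq (norm_mul_lt_one hB hC.le)
  have hbd := qpi_ne_zero hq (norm_mul_lt_one hB hD.le)
  have hcd := qpi_ne_zero hq (norm_mul_lt_one hC hD.le)
  simp [qpi_ne_zero hq hq, hne ha hB, hne ha hC, hne ha hD, hbc, hbd, hcd]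

lemma continuousOn_massRatio (hq : ‖q‖ < 1) (hB : ‖b‖ < 1) (hC : ‖c‖ < 1) (hD : ‖d‖ < 1) :
    ContinuousOn (fun a ↦ massRatio q a b c d) (ball 0 1) := by
  have hmoment : ContinuousOn (fun a ↦ momentFunctional q {a, b, c, d} 1) (ball 0 1) :=
    continuousOn_momentFunctional_cons (T := {b, c, d}) (f := fun _ ↦ 1) hq (by simp [hB, hC, hD])
      (by simpa only [eval_one] using continuousOn_const)
  exact hmoment.div (continuousOn_awh_zero hq hB hC hD) fun a ha ↦
    awh_zero_ne_zero hq (mem_ball_zero_iff.1 ha) hB hC hD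

lemma eq_apply_zero_of_mul_invariant {f : ℂ → ℂ} (hq : ‖q‖ < 1) (hf : ContinuousOn f (ball 0 1))
    (hinv : ∀ x, ‖x‖ < 1 → f (q * x) = f x) {x : ℂ} (hx : ‖x‖ < 1) : f x = f 0 := by
  have hiter (k : ℕ) : f (x * q ^ k) = f x := by
    induction k with
    | zero => rw [pow_zero, mul_one]
    | succ k ih => rw [← ih, ← hinv _ (norm_mul_pow_lt_one hq hx k), pow_succ]; ring_nf
  have hlim : Filter.Tendsto (fun k : ℕ ↦ x * q ^ k) Filter.atTop (nhds 0) := by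
    simpa using (tendsto_pow_atTop_nhds_zero_of_norm_lt_one hq).const_mul x
  have hcont : ContinuousAt f 0 := hf.continuousAt (Metric.ball_mem_nhds 0 one_pos)
  exact tendsto_nhds_unique (tendsto_const_nhds.congr fun k ↦ (hiter k).symm)
    (hcont.tendsto.comp hlim)

lemma massRatio_eq_massRatio_zero (hq : ‖q‖ < 1) (hq0 : q ≠ 0) (hA : ‖a‖ < 1) (hB : ‖b‖ < 1)
    (hC : ‖c‖ < 1) (hD : ‖d‖ < 1) : massRatio q a b c d = massRatio q 0 0 0 0 := by
  have hstep {a b c d : ℂ} (hA : ‖a‖ < 1) (hB : ‖b‖ < 1) (hC : ‖c‖ < 1) (hD : ‖d‖ < 1) :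
      massRatio q a b c d = massRatio q b c d 0 :=
    (eq_apply_zero_of_mul_invariant (f := fun a ↦ massRatio q a b c d) hq
      (continuousOn_massRatio hq hB hC hD) (fun _ ha ↦ massRatio_shift hq hq0 ha hB hC hD) hA).trans
      (massRatio_rotate q 0 b c d).symm
  have h0 : ‖(0 : ℂ)‖ < 1 := by rw [norm_zero]; exact one_pos
  rw [hstep hA hB hC hD, hstep hB hC hD h0, hstep hC hD h0 h0, hstep hD h0 h0 h0]

lemma reducedWeight_special (hq : ‖q‖ < 1) {s : ℂ} (hs : s ^ 2 = q) (hs1 : ‖s‖ < 1) {z : ℂ}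
    (hz : z ∈ sphere (0 : ℂ) 1) : reducedWeight q {s, -s, q, -q} z = 1 := by
  have hne {t : ℂ} (ht : ‖t‖ < 1) := qpiPair_ne_zero_of_mem_unitSphere hq ht hz
  have hprod : qpiPair q q (z ^ 2) =
      qpiPair q s z * (qpiPair q (-s) z * (qpiPair q q z * qpiPair q (-q) z)) := by
    simp only [qpiPair, ← inv_pow]
    rw [qpi_sq_eq_mul_of_sq_eq hq hs z, qpi_sq_eq_mul_of_sq_eq hq hs z⁻¹]
    ring
  simp only [reducedWeight, Multiset.insert_eq_cons, Multiset.map_cons,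
    Multiset.map_singleton, Multiset.prod_cons, Multiset.prod_singleton]
  rw [hprod, div_self]
  exact mul_ne_zero (hne hs1) (mul_ne_zero (hne (norm_neg_lt_one hs1))
    (mul_ne_zero (hne hq) (hne (norm_neg_lt_one hq))))

lemma momentFunctional_special (hq : ‖q‖ < 1) {s : ℂ} (hs : s ^ 2 = q) (hs1 : ‖s‖ < 1) :
    momentFunctional q {s, -s, q, -q} 1 = 1 := by
  have hmean : circleAverage (fun z : ℂ ↦ 1 - z ^ 2) 0 1 = 1 := by
    have hdiff : Differentiable ℂ fun z : ℂ ↦ 1 - z ^ 2 := by fun_prop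
    rw [hdiff.diffContOnCl.circleAverage]
    simp
  have hsymm := circleAverage_add_comp_inv (f := fun z : ℂ ↦ 1 - z ^ 2) (by fun_prop)
  rw [hmean, mul_one] at hsymm
  refine (congrArg (2⁻¹ * ·) ((Real.circleAverage_congr_sphere fun z hz ↦ ?_).trans hsymm)).trans
    (inv_mul_cancel₀ two_ne_zero)
  rw [abs_one] at hz
  have hz0 := ne_zero_of_mem_unitSphere hz
  simp only [weight, reducedWeight_special hq hs hs1 hz, eval_one]
  field_simp
  ring

lemma awh_zero_special (hq : ‖q‖ < 1) {s : ℂ} (hs : s ^ 2 = q) :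
    awh q s (-s) q (-q) 0 = 1 := by
  have hq3 : ‖q * (q * q)‖ < 1 := norm_mul_lt_one hq (norm_mul_lt_one hq hq.le).le
  have hq2 : ‖q ^ 2‖ < 1 := by rw [sq]; exact norm_mul_lt_one hq hq.le
  have heuler : qpi q (-q) * ((1 - q) * (qpi q (s * q) * qpi q (-(s * q)))) = 1 := by
    rw [qpi_mul_qpi_neg hq, mul_pow, hs, mul_comm q (q ^ 2), ← qpi_eq_one_sub_mul hq2,
      qpi_neg_mul_qpi_sq_eq_one hq]
  have hqq : qpi q q = (1 - q) * ((1 - q * q) * qpi q (q * (q * q))) := by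
    rw [← qpi_eq_one_sub_mul hq (q * q), ← qpi_eq_one_sub_mul hq q]
  have hss : s * -s = -q := by rw [← hs]; ring
  have hden : qpi q q * qpi q (-q) * qpi q (s * q) * qpi q (-(s * q)) * qpi q (-(s * q)) *
      qpi q (s * q) * qpi q (q * -q) = qpi q (q * (q * q)) := by
    calc _ = (qpi q (-q) * ((1 - q) * (qpi q (s * q) * qpi q (-(s * q))))) ^ 2 *
          qpi q (q * (q * q)) := by rw [hqq, qpi_eq_one_sub_mul hq (-q)]; ring
      _ = qpi q (q * (q * q)) := by rw [heuler, one_pow, one_mul]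
  rw [awh_zero, hss, show -q * q * -q = q * (q * q) by ring, mul_neg s q, neg_mul s q,
    neg_mul_neg s q, hden, div_self (qpi_ne_zero hq hq3)]

theorem momentFunctional_one (hq : ‖q‖ < 1) (hq0 : q ≠ 0) (hA : ‖a‖ < 1) (hB : ‖b‖ < 1)
    (hC : ‖c‖ < 1) (hD : ‖d‖ < 1) : momentFunctional q {a, b, c, d} 1 = awh q a b c d 0 := by
  obtain ⟨s, hs, hs1⟩ := exists_sq_eq_and_norm_lt_one hq
  have hratio : massRatio q a b c d = 1 := by
    rw [massRatio_eq_massRatio_zero hq hq0 hA hB hC hD, ← massRatio_eq_massRatio_zero hq hq0 hs1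
      (norm_neg_lt_one hs1) hq (norm_neg_lt_one hq), massRatio, momentFunctional_special hq hs hs1,
      awh_zero_special hq hs, div_one]
  rwa [massRatio, div_eq_one_iff_eq (awh_zero_ne_zero hq hA hB hC hD)] at hratio

end FourParameters

section TerminatingSum

variable {q : ℂ}

lemma qp_zero (q x : ℂ) : qp q x 0 = 1 := by rw [qp, range_zero, prod_empty]

lemma qp_succ (q x : ℂ) (k : ℕ) : qp q x (k + 1) = qp q x k * (1 - x * q ^ k) := by
  rw [qp, prod_range_succ, qp]

lemma qp_add (q x : ℂ) (m k : ℕ) : qp q x (m + k) = qp q x m * qp q (x * q ^ m) k := by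
  simp only [qp, prod_range_add, pow_add, mul_assoc]

lemma qp_succ' (q x : ℂ) (k : ℕ) : qp q x (k + 1) = (1 - x) * qp q (x * q) k := by
  rw [add_comm, qp_add, qp_succ, qp_zero, pow_zero, mul_one, one_mul, pow_one]

lemma qp_ne_zero (hq : ‖q‖ < 1) {x : ℂ} (hx : ‖x‖ < 1) (k : ℕ) : qp q x k ≠ 0 :=
  prod_ne_zero_iff.2 fun j _ ↦ one_sub_ne_zero (norm_mul_pow_lt_one hq hx j)

lemma qp_div_qp (hq : ‖q‖ < 1) {x : ℂ} (hx : ‖x‖ < 1) (j k : ℕ) :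
    qp q (x * q ^ j) k / qp q x k = qp q (x * q ^ k) j / qp q x j := by
  rw [div_eq_div_iff (qp_ne_zero hq hx k) (qp_ne_zero hq hx j), mul_comm, ← qp_add, add_comm,
    qp_add, mul_comm]

lemma qp_inv_pow_self (hq0 : q ≠ 0) (n : ℕ) : qp q (q ^ n)⁻¹ (n + 1) = 0 := by
  rw [qp_succ, inv_mul_cancel₀ (pow_ne_zero _ hq0), sub_self, mul_zero]

/-- The terminating sum `f ↦ ∑_{k ≤ n} (q⁻ⁿ; q)_k / (q; q)_k · q^k f(q^k)`, which is the common
shape of the basic hypergeometric sums that arise from `awPoly`. -/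
def terminatingSum (q : ℂ) (n : ℕ) : (ℂ → ℂ) →ₗ[ℂ] ℂ :=
  ∑ k ∈ range (n + 1), (qp q (q ^ n)⁻¹ k * q ^ k / qp q q k) • LinearMap.proj (q ^ k)

lemma terminatingSum_apply (q : ℂ) (n : ℕ) (f : ℂ → ℂ) :
    terminatingSum q n f =
      ∑ k ∈ range (n + 1), qp q (q ^ n)⁻¹ k * q ^ k / qp q q k * f (q ^ k) := by
  simp only [terminatingSum, LinearMap.sum_apply, LinearMap.smul_apply, LinearMap.proj_apply,
    smul_eq_mul]

lemma terminatingSum_congr {n : ℕ} {f g : ℂ → ℂ} (h : ∀ k : ℕ, f (q ^ k) = g (q ^ k)) :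
    terminatingSum q n f = terminatingSum q n g := by
  simp only [terminatingSum_apply, h]

lemma terminatingSum_zero (q : ℂ) (f : ℂ → ℂ) : terminatingSum q 0 f = f 1 := by
  simp [terminatingSum_apply, qp_zero]

lemma terminatingSum_coeff_succ (hq0 : q ≠ 0) (hq : ‖q‖ < 1) (n k : ℕ) :
    qp q (q ^ (n + 1))⁻¹ (k + 1) * q ^ (k + 1) / qp q q (k + 1) =
      qp q (q ^ n)⁻¹ (k + 1) / qp q q (k + 1) - qp q (q ^ n)⁻¹ k / qp q q k := by
  have hshift : (q ^ (n + 1))⁻¹ * q = (q ^ n)⁻¹ := by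
    field_simp
    ring
  have hqk := qp_ne_zero hq hq k
  have hlast := one_sub_ne_zero (norm_mul_pow_lt_one hq hq k)
  rw [← pow_succ'] at hlast
  rw [qp_succ', hshift, qp_succ q (q ^ n)⁻¹, qp_succ q q, ← pow_succ']
  generalize qp q (q ^ n)⁻¹ k = u
  field_simp
  ring

/- Summation by parts: `terminatingSum q n` is the `n`-fold q-difference quotient at `1`. -/
lemma terminatingSum_succ (hq0 : q ≠ 0) (hq : ‖q‖ < 1) (n : ℕ) (f : ℂ → ℂ) :
    terminatingSum q (n + 1) f = terminatingSum q n (fun x ↦ (f x - f (q * x)) / x) := by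
  set u : ℕ → ℂ := fun k ↦ qp q (q ^ n)⁻¹ k / qp q q k with hu
  have hlast : u (n + 1) = 0 := by simp only [hu, qp_inv_pow_self hq0, zero_div]
  have hdiff : terminatingSum q n (fun x ↦ (f x - f (q * x)) / x) =
      ∑ k ∈ range (n + 1 + 1), u k * f (q ^ k) - ∑ k ∈ range (n + 1), u k * f (q ^ (k + 1)) := by
    rw [sum_range_succ _ (n + 1), hlast, zero_mul, add_zero, ← sum_sub_distrib,
      terminatingSum_apply]
    refine sum_congr rfl fun k _ ↦ ?_
    have hk : q ^ k ≠ 0 := pow_ne_zero k hq0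
    rw [pow_succ', hu]
    field_simp
  rw [hdiff, terminatingSum_apply, sum_range_succ', sum_range_succ' _ (n + 1), add_sub_right_comm,
    ← sum_sub_distrib]
  congr 1
  · exact sum_congr rfl fun k _ ↦ by rw [terminatingSum_coeff_succ hq0 hq, sub_mul]
  · simp [hu, qp_zero]

lemma terminatingSum_pow_eq_zero (hq0 : q ≠ 0) (hq : ‖q‖ < 1) {n i : ℕ} (hi : i < n) :
    terminatingSum q n (fun x ↦ x ^ i) = 0 := by
  induction n generalizing i with
  | zero => exact absurd hi i.not_lt_zero
  | succ n ih =>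
    rw [terminatingSum_succ hq0 hq]
    cases i with
    | zero => simp [terminatingSum_apply]
    | succ i =>
      rw [terminatingSum_congr (g := (1 - q ^ (i + 1)) • fun x ↦ x ^ i), map_smul,
        ih (Nat.lt_of_succ_lt_succ hi), smul_zero]
      intro k
      simp only [Pi.smul_apply, smul_eq_mul]
      field_simp
      ring

lemma terminatingSum_eval_eq_zero (hq0 : q ≠ 0) (hq : ‖q‖ < 1) {n : ℕ} {P : ℂ[X]}
    (hP : P.natDegree < n) : terminatingSum q n (fun x ↦ P.eval x) = 0 := by
  have hexpand : (fun x ↦ P.eval x) =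
      ∑ i ∈ range (P.natDegree + 1), P.coeff i • fun x : ℂ ↦ x ^ i := by
    ext x
    simp only [eval_eq_sum_range, Finset.sum_apply, Pi.smul_apply, smul_eq_mul]
  rw [hexpand, map_sum]
  refine sum_eq_zero fun i hi ↦ ?_
  rw [map_smul, terminatingSum_pow_eq_zero hq0 hq (by grind), smul_zero]

lemma terminatingSum_pow_div (hq0 : q ≠ 0) (hq : ‖q‖ < 1) (n : ℕ) {y : ℂ} (hy : ‖y‖ < 1) :
    terminatingSum q n (fun x ↦ x ^ n / (1 - y * x)) = qp q q n / qp q y (n + 1) := by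
  induction n generalizing y with
  | zero => simp [terminatingSum_zero, qp]
  | succ n ih =>
    have hyq : ‖y * q‖ < 1 := norm_mul_lt_one hy hq.le
    have h1 := one_sub_ne_zero hy
    have hlast := one_sub_ne_zero (norm_mul_pow_lt_one hq hyq n)
    have hmid := qp_ne_zero hq hyq n
    rw [terminatingSum_succ hq0 hq, terminatingSum_congr (g := (fun x ↦ x ^ n / (1 - y * x)) -
      q ^ (n + 1) • fun x ↦ x ^ n / (1 - y * q * x)), map_sub, map_smul, ih hy, ih hyq]
    · rw [qp_succ' q y (n + 1), qp_succ' q y n, qp_succ q (y * q) n, qp_succ q q, smul_eq_mul]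
      field_simp
      ring
    · intro k
      have hk : q ^ k ≠ 0 := pow_ne_zero _ hq0
      simp only [Pi.sub_apply, Pi.smul_apply, smul_eq_mul, ← mul_assoc]
      rw [pow_succ (q ^ k), mul_pow]
      field_simp
      ring

lemma natDegree_prod_one_sub_le (β : ℕ → ℂ) (m : ℕ) :
    (∏ j ∈ range m, (1 - C (β j) * X)).natDegree ≤ m := by
  refine (natDegree_prod_le _ _).trans ?_
  refine (sum_le_card_nsmul _ _ 1 fun j _ ↦ by compute_degree).trans ?_
  rw [card_range, smul_eq_mul, mul_one]

/- This form of the q-Pfaff-Saalschütz sum keeps the numerator parameters `β` free, so that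
nothing degenerates when some of them vanish. -/
lemma terminatingSum_prod_div (hq0 : q ≠ 0) (hq : ‖q‖ < 1) (β : ℕ → ℂ) {y : ℂ} (hy : ‖y‖ < 1)
    (m i : ℕ) :
    terminatingSum q (m + i) (fun x ↦ x ^ i * (∏ j ∈ range m, (1 - β j * x)) / (1 - y * x)) =
      qp q q (m + i) * (∏ j ∈ range m, (y - β j)) / qp q y (m + i + 1) := by
  induction m generalizing i with
  | zero => simpa using terminatingSum_pow_div hq0 hq i hy
  | succ m ih =>
    set P : ℂ[X] := X ^ i * ∏ j ∈ range m, (1 - C (β j) * X) with hP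
    have hdeg : P.natDegree < m + 1 + i := by
      have h : P.natDegree ≤ i + m :=
        natDegree_mul_le_of_le (natDegree_X_pow_le i) (natDegree_prod_one_sub_le β m)
      omega
    have hsplit (k : ℕ) : (q ^ k) ^ i * (∏ j ∈ range (m + 1), (1 - β j * q ^ k)) /
        (1 - y * q ^ k) = (y - β m) * ((q ^ k) ^ (i + 1) *
          (∏ j ∈ range m, (1 - β j * q ^ k)) / (1 - y * q ^ k)) + P.eval (q ^ k) := by
      have hk := one_sub_ne_zero (norm_mul_pow_lt_one hq hy k)
      simp only [hP, eval_mul, eval_pow, eval_X, eval_prod, eval_sub, eval_one, eval_C]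
      rw [prod_range_succ, pow_succ, ← mul_div_assoc, div_add' _ _ _ hk]
      ring
    rw [terminatingSum_congr (g := ((y - β m) • fun x ↦ x ^ (i + 1) *
      (∏ j ∈ range m, (1 - β j * x)) / (1 - y * x)) + fun x ↦ P.eval x) hsplit, map_add, map_smul,
      terminatingSum_eval_eq_zero hq0 hq hdeg, add_assoc, add_comm 1, ih (i + 1), prod_range_succ,
      smul_eq_mul]
    ring

lemma qp_inv_pow_mul_prod_sub (hq0 : q ≠ 0) (n : ℕ) {u v y : ℂ}
    (hy : q * y = q ^ n * (u * v)) :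
    qp q (q ^ n)⁻¹ n * q ^ n * ∏ j ∈ range n, (y - u * q ^ j) = u ^ n * qp q q n * qp q v n := by
  have hfactor : ∀ j ∈ range n, (1 - (q ^ n)⁻¹ * q ^ j) * q * (y - u * q ^ (n - 1 - j)) =
      u * (1 - q * q ^ (n - 1 - j)) * (1 - v * q ^ j) := by
    intro j hj
    obtain ⟨i, rfl⟩ : ∃ i, n = j + i + 1 := ⟨n - 1 - j, by grind⟩
    have hy' : y = q ^ (j + i) * (u * v) := mul_left_cancel₀ hq0 (by rw [hy]; ring)
    rw [show j + i + 1 - 1 - j = i by omega, hy']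
    field_simp
    ring
  calc _ = ∏ j ∈ range n, (1 - (q ^ n)⁻¹ * q ^ j) * q * (y - u * q ^ (n - 1 - j)) := by
        rw [prod_mul_distrib, prod_mul_distrib, prod_const, card_range, qp,
          prod_range_reflect fun j ↦ y - u * q ^ j]
    _ = ∏ j ∈ range n, u * (1 - q * q ^ (n - 1 - j)) * (1 - v * q ^ j) := prod_congr rfl hfactor
    _ = u ^ n * qp q q n * qp q v n := by
        rw [prod_mul_distrib, prod_mul_distrib, prod_const, card_range,
          prod_range_reflect fun j ↦ 1 - q * q ^ j, qp, qp]

lemma qp_mul_pow (q x : ℂ) (j k : ℕ) :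
    qp q (x * q ^ k) j = ∏ i ∈ range j, (1 - x * q ^ i * q ^ k) :=
  prod_congr rfl fun i _ ↦ by rw [mul_right_comm]

lemma sum_qp_div_mul_qp_div_eq_zero (hq0 : q ≠ 0) (hq : ‖q‖ < 1) {u v : ℂ} (hu : ‖u‖ < 1)
    (hv : ‖v‖ < 1) {i j n : ℕ} (h : i + j < n) :
    ∑ k ∈ range (n + 1), qp q (q ^ n)⁻¹ k * q ^ k / qp q q k *
      (qp q (u * q ^ i) k / qp q u k * (qp q (v * q ^ j) k / qp q v k)) = 0 := by
  set P : ℂ[X] := (∏ l ∈ range i, (1 - C (u * q ^ l) * X)) * ∏ l ∈ range j, (1 - C (v * q ^ l) * X)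
    with hP
  have hdeg : P.natDegree ≤ i + j :=
    natDegree_mul_le_of_le (natDegree_prod_one_sub_le _ i) (natDegree_prod_one_sub_le _ j)
  have heval (k : ℕ) : qp q (u * q ^ i) k / qp q u k * (qp q (v * q ^ j) k / qp q v k) =
      (qp q u i * qp q v j)⁻¹ * P.eval (q ^ k) := by
    simp only [hP, eval_mul, eval_X, eval_prod, eval_sub, eval_one, eval_C]
    rw [qp_div_qp hq hu, qp_div_qp hq hv, qp_mul_pow, qp_mul_pow, div_mul_div_comm, div_eq_inv_mul]
  simp only [heval]
  rw [← terminatingSum_apply q n fun x ↦ (qp q u i * qp q v j)⁻¹ * P.eval x]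
  exact (map_smul (terminatingSum q n) (qp q u i * qp q v j)⁻¹ fun x ↦ P.eval x).trans
    (smul_eq_zero_of_right _ (terminatingSum_eval_eq_zero hq0 hq (hdeg.trans_lt h)))

lemma sum_qp_div_mul_qp_div (hq0 : q ≠ 0) (hq : ‖q‖ < 1) {u y : ℂ} (hu : ‖u‖ < 1)
    (hy : ‖y‖ < 1) (n : ℕ) :
    ∑ k ∈ range (n + 1), qp q (q ^ n)⁻¹ k * q ^ k / qp q q k *
      (qp q y k / qp q (y * q) k * (qp q (u * q ^ n) k / qp q u k)) =
      (1 - y) / qp q u n * (qp q q n * (∏ i ∈ range n, (y - u * q ^ i)) / qp q y (n + 1)) := by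
  have hratio (k : ℕ) : qp q y k / qp q (y * q) k = (1 - y) / (1 - y * q ^ k) := by
    rw [div_eq_div_iff (qp_ne_zero hq (norm_mul_lt_one hy hq.le) k)
      (one_sub_ne_zero (norm_mul_pow_lt_one hq hy k)), ← qp_succ, ← qp_succ']
  have hterm (k : ℕ) : qp q y k / qp q (y * q) k * (qp q (u * q ^ n) k / qp q u k) =
      (1 - y) / qp q u n * ((q ^ k) ^ 0 * (∏ i ∈ range n, (1 - u * q ^ i * q ^ k)) /
        (1 - y * q ^ k)) := by
    rw [hratio, qp_div_qp hq hu, qp_mul_pow]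
    ring
  have hsum := terminatingSum_prod_div hq0 hq (fun i ↦ u * q ^ i) hy n 0
  rw [add_zero, terminatingSum_apply] at hsum
  rw [← hsum, mul_sum]
  exact sum_congr rfl fun k _ ↦ by rw [hterm, mul_left_comm]

end TerminatingSum

section Orthogonality

variable {q a b c d : ℂ}

/-- The polynomial `(tz; q)_k (t/z; q)_k` in `x = (z + 1/z)/2`. -/
def pairPoly (q t : ℂ) (k : ℕ) : ℂ[X] := ∏ j ∈ range k, pairFactor (t * q ^ j)

lemma natDegree_pairFactor_le (t : ℂ) : (pairFactor t).natDegree ≤ 1 := by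
  rw [pairFactor]
  compute_degree

lemma natDegree_pairPoly_le (q t : ℂ) (k : ℕ) : (pairPoly q t k).natDegree ≤ k := by
  refine (natDegree_prod_le _ _).trans ?_
  refine (sum_le_card_nsmul _ _ 1 fun j _ ↦ natDegree_pairFactor_le _).trans ?_
  rw [card_range, smul_eq_mul, mul_one]

lemma coeff_pairPoly (q t : ℂ) (k : ℕ) :
    (pairPoly q t k).coeff k = t ^ k * ∏ j ∈ range k, (-2 * q ^ j) := by
  have h := coeff_prod_of_natDegree_le (s := range k) (fun j ↦ pairFactor (t * q ^ j)) 1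
    fun j _ ↦ natDegree_pairFactor_le _
  rw [card_range, mul_one] at h
  rw [pairPoly, h, ← card_range k, ← prod_const, card_range, ← prod_mul_distrib]
  refine prod_congr rfl fun j _ ↦ ?_
  rw [pairFactor, coeff_sub, coeff_C_mul, coeff_X_one, coeff_C_of_ne_zero one_ne_zero]
  ring

lemma momentFunctional_mul_pow_cons (hq : ‖q‖ < 1) {t : ℂ} (ht : ‖t‖ < 1) (T : Multiset ℂ)
    (k : ℕ) (f : ℂ[X]) : momentFunctional q (t * q ^ k ::ₘ T) f =
      momentFunctional q (t ::ₘ T) (pairPoly q t k * f) := by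
  induction k generalizing f with
  | zero => simp [pairPoly]
  | succ k ih =>
    rw [show t * q ^ (k + 1) = q * (t * q ^ k) by ring,
      momentFunctional_mul_cons hq (norm_mul_pow_lt_one hq ht k), ih, pairPoly, pairPoly,
      prod_range_succ, mul_assoc]

lemma momentFunctional_pairPoly_mul_pairPoly (hq : ‖q‖ < 1) (hq0 : q ≠ 0) (hA : ‖a‖ < 1)
    (hB : ‖b‖ < 1) (hC : ‖c‖ < 1) (hD : ‖d‖ < 1) (k j : ℕ) :
    momentFunctional q {a, b, c, d} (pairPoly q a k * pairPoly q b j) =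
      awh q (a * q ^ k) (b * q ^ j) c d 0 := by
  rw [← momentFunctional_one hq hq0 (norm_mul_pow_lt_one hq hA k) (norm_mul_pow_lt_one hq hB j)
    hC hD]
  simp only [Multiset.insert_eq_cons]
  rw [momentFunctional_mul_pow_cons hq hA, Multiset.cons_swap a (b * q ^ j),
    momentFunctional_mul_pow_cons hq hB, Multiset.cons_swap b a, mul_one, mul_comm]

lemma awh_zero_pow_shift (hq : ‖q‖ < 1) (hA : ‖a‖ < 1) (hB : ‖b‖ < 1) (hC : ‖c‖ < 1)
    (hD : ‖d‖ < 1) (k : ℕ) : qp q (a * b * c * d) k * awh q (a * q ^ k) b c d 0 =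
      qp q (a * b) k * qp q (a * c) k * qp q (a * d) k * awh q a b c d 0 := by
  induction k with
  | zero => simp [qp_zero]
  | succ k ih =>
    have hstep := awh_zero_shift hq (norm_mul_pow_lt_one hq hA k) hB hC hD
    rw [show q * (a * q ^ k) = a * q ^ (k + 1) by ring] at hstep
    simp only [qp_succ]
    linear_combination qp q (a * b * c * d) k * hstep +
      (1 - a * b * q ^ k) * (1 - a * c * q ^ k) * (1 - a * d * q ^ k) * ih

lemma awh_zero_swap (q a b c d : ℂ) : awh q b a c d 0 = awh q a b c d 0 := by
  rw [awh_zero, awh_zero, mul_comm b a]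
  congr 1
  ring

/-- The Askey-Wilson polynomial as a polynomial in `x = (z + 1/z)/2`. -/
def awPoly (q a b c d : ℂ) (n : ℕ) : ℂ[X] :=
  (a ^ (-(n : ℤ)) * (qp q (a * b) n * qp q (a * c) n * qp q (a * d) n)) •
    ∑ k ∈ range (n + 1),
      (qp q (q ^ n)⁻¹ k * qp q (q ^ ((n : ℤ) - 1) * (a * b * c * d)) k * q ^ k /
        (qp q (a * b) k * qp q (a * c) k * qp q (a * d) k * qp q q k)) • pairPoly q a k

lemma eval_awPoly (q a b c d : ℂ) (n : ℕ) (x : ℂ) :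
    (awPoly q a b c d n).eval x = awp q a b c d n x := by
  rw [awPoly, awp, eval_smul, eval_finsetSum, smul_eq_mul]
  congr 1
  refine sum_congr rfl fun k _ ↦ ?_
  have hpair : (pairPoly q a k).eval x =
      ∏ j ∈ range k, (1 - 2 * a * q ^ j * x + a ^ 2 * q ^ (2 * j)) := by
    rw [pairPoly, eval_prod]
    refine prod_congr rfl fun j _ ↦ ?_
    simp only [pairFactor, eval_sub, eval_mul, eval_C, eval_X]
    ring
  rw [eval_smul, hpair, smul_eq_mul]
  ring

lemma awPoly_zero (q a b c d : ℂ) : awPoly q a b c d 0 = 1 := by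
  simp [awPoly, qp_zero, pairPoly]

lemma natDegree_awPoly_le (q a b c d : ℂ) (n : ℕ) : (awPoly q a b c d n).natDegree ≤ n :=
  (natDegree_smul_le _ _).trans <| natDegree_sum_le_of_forall_le _ _ fun k hk ↦
    (natDegree_smul_le _ _).trans ((natDegree_pairPoly_le q a k).trans (by grind))

lemma coeff_awPoly (hq : ‖q‖ < 1) (ha0 : a ≠ 0) (hA : ‖a‖ < 1) (hB : ‖b‖ < 1) (hC : ‖c‖ < 1)
    (hD : ‖d‖ < 1) (n : ℕ) : (awPoly q a b c d n).coeff n =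
      qp q (q ^ n)⁻¹ n * qp q (q ^ ((n : ℤ) - 1) * (a * b * c * d)) n * q ^ n / qp q q n *
        ∏ j ∈ range n, (-2 * q ^ j) := by
  have hab := qp_ne_zero hq (norm_mul_lt_one hA hB.le) n
  have hac := qp_ne_zero hq (norm_mul_lt_one hA hC.le) n
  have had := qp_ne_zero hq (norm_mul_lt_one hA hD.le) n
  have hqq := qp_ne_zero hq hq n
  have hlower (k : ℕ) (hk : k ∈ range n) : (pairPoly q a k).coeff n = 0 :=
    coeff_eq_zero_of_natDegree_lt ((natDegree_pairPoly_le q a k).trans_lt (mem_range.1 hk))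
  rw [awPoly, coeff_smul, finsetSum_coeff, sum_range_succ, sum_eq_zero fun k hk ↦ by
    rw [coeff_smul, hlower k hk, smul_zero], zero_add, coeff_smul, coeff_pairPoly, smul_eq_mul,
    smul_eq_mul, zpow_neg, zpow_natCast]
  field_simp

lemma momentFunctional_awPoly_mul_pairPoly (hq : ‖q‖ < 1) (hq0 : q ≠ 0) (hA : ‖a‖ < 1)
    (hB : ‖b‖ < 1) (hC : ‖c‖ < 1) (hD : ‖d‖ < 1) (n j : ℕ) :
    momentFunctional q {a, b, c, d} (awPoly q a b c d n * pairPoly q b j) =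
      a ^ (-(n : ℤ)) * (qp q (a * b) n * qp q (a * c) n * qp q (a * d) n) *
        awh q a (b * q ^ j) c d 0 *
        ∑ k ∈ range (n + 1), qp q (q ^ n)⁻¹ k * q ^ k / qp q q k *
          (qp q (q ^ ((n : ℤ) - 1) * (a * b * c * d)) k / qp q (a * b * c * d * q ^ j) k *
            (qp q (a * b * q ^ j) k / qp q (a * b) k)) := by
  have hL := isLinearMap_momentFunctional hq (forall_mem_norm_lt_one hA hB hC hD)
  have hBj := norm_mul_pow_lt_one hq hB j
  have habcd := norm_mul_lt_one (norm_mul_lt_one (norm_mul_lt_one hA hB.le) hC.le) hD.le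
  rw [awPoly, smul_mul_assoc, sum_mul, hL.map_smul, ← hL.mk'_apply, map_sum, smul_eq_mul,
    mul_assoc _ (awh _ _ _ _ _ _)]
  congr 1
  rw [mul_sum]
  refine sum_congr rfl fun k _ ↦ ?_
  have hab := qp_ne_zero hq (norm_mul_lt_one hA hB.le) k
  have hac := qp_ne_zero hq (norm_mul_lt_one hA hC.le) k
  have had := qp_ne_zero hq (norm_mul_lt_one hA hD.le) k
  have hshift := awh_zero_pow_shift hq hA hBj hC hD k
  rw [show a * (b * q ^ j) * c * d = a * b * c * d * q ^ j by ring, ← mul_assoc a b, mul_comm,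
    ← eq_div_iff (qp_ne_zero hq (norm_mul_pow_lt_one hq habcd j) k)] at hshift
  rw [smul_mul_assoc, map_smul, hL.mk'_apply,
    momentFunctional_pairPoly_mul_pairPoly hq hq0 hA hB hC hD, hshift, smul_eq_mul]
  field_simp

lemma momentFunctional_awPoly_mul_pairPoly_eq_zero (hq : ‖q‖ < 1) (hq0 : q ≠ 0) (hA : ‖a‖ < 1)
    (hB : ‖b‖ < 1) (hC : ‖c‖ < 1) (hD : ‖d‖ < 1) {n j : ℕ} (hj : j < n) :
    momentFunctional q {a, b, c, d} (awPoly q a b c d n * pairPoly q b j) = 0 := by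
  obtain ⟨i, rfl⟩ := Nat.exists_eq_add_of_lt hj
  have habcd := norm_mul_lt_one (norm_mul_lt_one (norm_mul_lt_one hA hB.le) hC.le) hD.le
  have hnum : q ^ (((j + i + 1 : ℕ) : ℤ) - 1) * (a * b * c * d) =
      a * b * c * d * q ^ j * q ^ i := by
    rw [Nat.cast_succ, add_sub_cancel_right, zpow_natCast]
    ring
  rw [momentFunctional_awPoly_mul_pairPoly hq hq0 hA hB hC hD, hnum,
    sum_qp_div_mul_qp_div_eq_zero hq0 hq (norm_mul_pow_lt_one hq habcd j)
      (norm_mul_lt_one hA hB.le) (by omega), mul_zero]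

lemma momentFunctional_awPoly_mul_pairPoly_self (hq : ‖q‖ < 1) (hq0 : q ≠ 0) (hA : ‖a‖ < 1)
    (hB : ‖b‖ < 1) (hC : ‖c‖ < 1) (hD : ‖d‖ < 1) {m n : ℕ} (hn : n = m + 1) {y : ℂ}
    (hy : y = a * b * c * d * q ^ m) :
    momentFunctional q {a, b, c, d} (awPoly q a b c d n * pairPoly q b n) =
      a ^ (-(n : ℤ)) * (qp q (a * c) n * qp q (a * d) n) * awh q a (b * q ^ n) c d 0 * (1 - y) *
        (qp q q n * (∏ i ∈ range n, (y - a * b * q ^ i)) / qp q y (n + 1)) := by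
  have habcd := norm_mul_lt_one (norm_mul_lt_one (norm_mul_lt_one hA hB.le) hC.le) hD.le
  have hy1 : ‖y‖ < 1 := hy ▸ norm_mul_pow_lt_one hq habcd m
  have hab := qp_ne_zero hq (norm_mul_lt_one hA hB.le) n
  have hnum : q ^ ((n : ℤ) - 1) * (a * b * c * d) = y := by
    rw [hn, Nat.cast_succ, add_sub_cancel_right, zpow_natCast, hy, mul_comm]
  have hden : a * b * c * d * q ^ n = y * q := by rw [hn, hy, pow_succ, mul_assoc _ _ q]
  rw [momentFunctional_awPoly_mul_pairPoly hq hq0 hA hB hC hD, hnum, hden,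
    sum_qp_div_mul_qp_div hq0 hq (norm_mul_lt_one hA hB.le) hy1]
  field_simp

end Orthogonality

lemma coeff_smul_map_eq_of_sequence {K M : Type*} [Field K] [AddCommGroup M] [Module K M]
    (S : Polynomial.Sequence K) (L : K[X] →ₗ[K] M) {n : ℕ} (hL : ∀ j < n, L (S j) = 0) {P : K[X]}
    (hP : P.natDegree ≤ n) : (S n).coeff n • L P = P.coeff n • L (S n) := by
  have hker : degreeLT K n ≤ LinearMap.ker L := by
    rw [← S.span_degreeLT fun i _ ↦ (leadingCoeff_ne_zero.2 (S.ne_zero i)).isUnit]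
    refine Submodule.span_le.2 ?_
    rintro _ ⟨j, hj, rfl⟩
    exact hL j hj
  have hmem : (S n).coeff n • P - P.coeff n • S n ∈ degreeLT K n := by
    rw [mem_degreeLT, degree_lt_iff_coeff_zero]
    intro i hi
    obtain rfl | hlt := hi.eq_or_lt
    · rw [coeff_sub, coeff_smul, coeff_smul, smul_eq_mul, smul_eq_mul, mul_comm, sub_self]
    · rw [coeff_sub, coeff_smul, coeff_smul, coeff_eq_zero_of_natDegree_lt (hP.trans_lt hlt),
        coeff_eq_zero_of_natDegree_lt ((S.natDegree_eq n).trans_lt hlt), smul_zero, smul_zero,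
        sub_zero]
  have h := hker hmem
  rwa [LinearMap.mem_ker, map_sub, map_smul, map_smul, sub_eq_zero] at h

section Norms

variable {q a b c d : ℂ}

lemma prod_neg_two_mul_pow_ne_zero (hq0 : q ≠ 0) (k : ℕ) : ∏ j ∈ range k, (-2 * q ^ j) ≠ 0 :=
  prod_ne_zero_iff.2 fun j _ ↦ mul_ne_zero (by norm_num) (pow_ne_zero j hq0)

/-- The polynomials `(tz; q)_k (t/z; q)_k`, for `t ≠ 0`, as a basis adapted to the degree. -/
def pairSequence (hq0 : q ≠ 0) {t : ℂ} (ht0 : t ≠ 0) : Polynomial.Sequence ℂ where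
  elems' := pairPoly q t
  degree_eq' k := degree_eq_of_le_of_coeff_ne_zero
    (natDegree_le_iff_degree_le.1 (natDegree_pairPoly_le q t k)) <| by
      rw [coeff_pairPoly]
      exact mul_ne_zero (pow_ne_zero k ht0) (prod_neg_two_mul_pow_ne_zero hq0 k)

lemma coeff_mul_momentFunctional_awPoly_mul (hq : ‖q‖ < 1) (hq0 : q ≠ 0) (hb0 : b ≠ 0)
    (hA : ‖a‖ < 1) (hB : ‖b‖ < 1) (hC : ‖c‖ < 1) (hD : ‖d‖ < 1) {n : ℕ} {P : ℂ[X]}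
    (hP : P.natDegree ≤ n) :
    (pairPoly q b n).coeff n * momentFunctional q {a, b, c, d} (awPoly q a b c d n * P) =
      P.coeff n * momentFunctional q {a, b, c, d} (awPoly q a b c d n * pairPoly q b n) :=
  coeff_smul_map_eq_of_sequence (pairSequence hq0 hb0)
    ((isLinearMap_momentFunctional hq (forall_mem_norm_lt_one hA hB hC hD)).mk' _ ∘ₗ
      LinearMap.mulLeft ℂ (awPoly q a b c d n))
    (fun _ hj ↦ momentFunctional_awPoly_mul_pairPoly_eq_zero hq hq0 hA hB hC hD hj) hP

lemma momentFunctional_awPoly_mul_eq_zero (hq : ‖q‖ < 1) (hq0 : q ≠ 0) (hb0 : b ≠ 0)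
    (hA : ‖a‖ < 1) (hB : ‖b‖ < 1) (hC : ‖c‖ < 1) (hD : ‖d‖ < 1) {n : ℕ} {P : ℂ[X]}
    (hP : P.natDegree < n) :
    momentFunctional q {a, b, c, d} (awPoly q a b c d n * P) = 0 := by
  have h := coeff_mul_momentFunctional_awPoly_mul hq hq0 hb0 hA hB hC hD hP.le
  rw [coeff_eq_zero_of_natDegree_lt hP, zero_mul, coeff_pairPoly] at h
  exact (mul_eq_zero.1 h).resolve_left
    (mul_ne_zero (pow_ne_zero n hb0) (prod_neg_two_mul_pow_ne_zero hq0 n))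

lemma momentFunctional_awPoly_sq_eq_mul_mass (hq : ‖q‖ < 1) (hq0 : q ≠ 0) (ha0 : a ≠ 0)
    (hb0 : b ≠ 0) (hA : ‖a‖ < 1) (hB : ‖b‖ < 1) (hC : ‖c‖ < 1) (hD : ‖d‖ < 1) {m n : ℕ}
    (hn : n = m + 1) {y : ℂ} (hy : y = a * b * c * d * q ^ m) :
    momentFunctional q {a, b, c, d} (awPoly q a b c d n * awPoly q a b c d n) =
      qp q q n * qp q (a * c) n * qp q (a * d) n * qp q (c * d) n *
        ((1 - y) / (1 - y * q ^ n)) * awh q a (b * q ^ n) c d 0 := by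
  have habcd := norm_mul_lt_one (norm_mul_lt_one (norm_mul_lt_one hA hB.le) hC.le) hD.le
  have hy1 : ‖y‖ < 1 := hy ▸ norm_mul_pow_lt_one hq habcd m
  have hyn := qp_ne_zero hq hy1 n
  have hylast := one_sub_ne_zero (norm_mul_pow_lt_one hq hy1 n)
  have hqn := qp_ne_zero hq hq n
  have hκ := prod_neg_two_mul_pow_ne_zero hq0 n
  have hnum : q ^ ((n : ℤ) - 1) * (a * b * c * d) = y := by
    rw [hn, Nat.cast_succ, add_sub_cancel_right, zpow_natCast, hy, mul_comm]
  have hprod := qp_inv_pow_mul_prod_sub hq0 n (u := a * b) (v := c * d) (y := y)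
    (by rw [hy, hn]; ring)
  have hcoeff := coeff_mul_momentFunctional_awPoly_mul hq hq0 hb0 hA hB hC hD
    (natDegree_awPoly_le q a b c d n)
  rw [coeff_pairPoly, coeff_awPoly hq ha0 hA hB hC hD, hnum,
    momentFunctional_awPoly_mul_pairPoly_self hq hq0 hA hB hC hD hn hy, qp_succ q y n] at hcoeff
  refine mul_left_cancel₀ (mul_ne_zero (pow_ne_zero n hb0) hκ) (hcoeff.trans ?_)
  calc _ = (∏ j ∈ range n, (-2 * q ^ j)) * a ^ (-(n : ℤ)) * (qp q (a * c) n * qp q (a * d) n) *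
        ((1 - y) / (1 - y * q ^ n)) * awh q a (b * q ^ n) c d 0 *
        (qp q (q ^ n)⁻¹ n * q ^ n * ∏ i ∈ range n, (y - a * b * q ^ i)) := by field_simp
    _ = _ := by
      rw [hprod, mul_pow, zpow_neg, zpow_natCast]
      field_simp

lemma awh_succ (q a b c d : ℂ) (m : ℕ) : awh q a b c d (m + 1) = awh q a b c d 0 *
    ((1 - a * b * c * d * q ^ m) / (1 - a * b * c * d * q ^ m * q ^ (m + 1)) *
      (qp q q (m + 1) * qp q (a * b) (m + 1) * qp q (a * c) (m + 1) * qp q (a * d) (m + 1) *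
        qp q (b * c) (m + 1) * qp q (b * d) (m + 1) * qp q (c * d) (m + 1) /
          qp q (a * b * c * d) (m + 1))) := by
  rw [awh_zero, awh, if_neg m.succ_ne_zero, Nat.add_sub_cancel,
    show 2 * (m + 1) - 1 = m + (m + 1) by omega, pow_add, mul_comm (q ^ m) (a * b * c * d),
    mul_comm (q ^ m * _) (a * b * c * d), ← mul_assoc (a * b * c * d),
    div_mul_div_comm (1 - _)]

lemma momentFunctional_awPoly_sq (hq : ‖q‖ < 1) (hq0 : q ≠ 0) (ha0 : a ≠ 0) (hb0 : b ≠ 0)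
    (hA : ‖a‖ < 1) (hB : ‖b‖ < 1) (hC : ‖c‖ < 1) (hD : ‖d‖ < 1) (n : ℕ) :
    momentFunctional q {a, b, c, d} (awPoly q a b c d n * awPoly q a b c d n) =
      awh q a b c d n := by
  obtain _ | m := n
  · rw [awPoly_zero, mul_one, momentFunctional_one hq hq0 hA hB hC hD]
  have habcd := norm_mul_lt_one (norm_mul_lt_one (norm_mul_lt_one hA hB.le) hC.le) hD.le
  have hshift := awh_zero_pow_shift hq hB hA hC hD (m + 1)
  rw [awh_zero_swap q a, awh_zero_swap q a, mul_comm b a, mul_comm,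
    ← eq_div_iff (qp_ne_zero hq habcd (m + 1))] at hshift
  rw [momentFunctional_awPoly_sq_eq_mul_mass hq hq0 ha0 hb0 hA hB hC hD rfl rfl, hshift, awh_succ]
  ring

theorem momentFunctional_awPoly_mul_awPoly_of_ne_zero (hq : ‖q‖ < 1) (hq0 : q ≠ 0) (ha0 : a ≠ 0)
    (hb0 : b ≠ 0) (hA : ‖a‖ < 1) (hB : ‖b‖ < 1) (hC : ‖c‖ < 1) (hD : ‖d‖ < 1) (m n : ℕ) :
    momentFunctional q {a, b, c, d} (awPoly q a b c d n * awPoly q a b c d m) =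
      if m = n then awh q a b c d n else 0 := by
  obtain hlt | rfl | hlt := lt_trichotomy m n
  · rw [if_neg hlt.ne, momentFunctional_awPoly_mul_eq_zero hq hq0 hb0 hA hB hC hD
      ((natDegree_awPoly_le q a b c d m).trans_lt hlt)]
  · rw [if_pos rfl, momentFunctional_awPoly_sq hq hq0 ha0 hb0 hA hB hC hD]
  · rw [if_neg hlt.ne', mul_comm, momentFunctional_awPoly_mul_eq_zero hq hq0 hb0 hA hB hC hD
      ((natDegree_awPoly_le q a b c d n).trans_lt hlt)]

lemma continuous_qp (q : ℂ) (k : ℕ) : Continuous fun x ↦ qp q x k := by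
  unfold qp
  fun_prop

lemma continuousOn_eval_awPoly (hq : ‖q‖ < 1) (hA : ‖a‖ < 1) (hC : ‖c‖ < 1) (hD : ‖d‖ < 1)
    (n : ℕ) : ContinuousOn (fun p : ℂ × ℂ ↦ (awPoly q a p.1 c d n).eval p.2)
      (ball 0 1 ×ˢ Set.univ) := by
  have hqp := continuous_qp q
  have hac := qp_ne_zero hq (norm_mul_lt_one hA hC.le)
  have had := qp_ne_zero hq (norm_mul_lt_one hA hD.le)
  simp only [eval_awPoly, awp]
  refine ContinuousOn.mul (by fun_prop) (continuousOn_finsetSum _ fun k _ ↦ ?_)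
  refine ContinuousOn.div (by fun_prop) (by fun_prop) fun p hp ↦ ?_
  have hab := qp_ne_zero hq (norm_mul_lt_one hA (mem_ball_zero_iff.1 hp.1).le)
  exact mul_ne_zero (mul_ne_zero (mul_ne_zero (hab k) (hac k)) (had k)) (qp_ne_zero hq hq k)

lemma continuousOn_awh (hq : ‖q‖ < 1) (hA : ‖a‖ < 1) (hC : ‖c‖ < 1) (hD : ‖d‖ < 1) (n : ℕ) :
    ContinuousOn (fun b ↦ awh q a b c d n) (ball 0 1) := by
  have hzero : ContinuousOn (fun b ↦ awh q a b c d 0) (ball 0 1) := by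
    simpa only [awh_zero_swap q a] using continuousOn_awh_zero hq hA hC hD
  obtain _ | m := n
  · exact hzero
  have hqp := continuous_qp q
  have habcd {b : ℂ} (hb : b ∈ ball (0 : ℂ) 1) : ‖a * b * c * d‖ < 1 :=
    norm_mul_lt_one (norm_mul_lt_one (norm_mul_lt_one hA (mem_ball_zero_iff.1 hb).le) hC.le) hD.le
  simp only [awh_succ]
  refine hzero.mul (ContinuousOn.mul ?_ ?_)
  · exact ContinuousOn.div (by fun_prop) (by fun_prop) fun b hb ↦
      one_sub_ne_zero (norm_mul_pow_lt_one hq (norm_mul_pow_lt_one hq (habcd hb) m) (m + 1))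
  · exact ContinuousOn.div (by fun_prop) (by fun_prop) fun b hb ↦ qp_ne_zero hq (habcd hb) (m + 1)

theorem momentFunctional_awPoly_mul_awPoly (hq : ‖q‖ < 1) (hq0 : q ≠ 0) (ha0 : a ≠ 0)
    (hA : ‖a‖ < 1) (hB : ‖b‖ < 1) (hC : ‖c‖ < 1) (hD : ‖d‖ < 1) (m n : ℕ) :
    momentFunctional q {a, b, c, d} (awPoly q a b c d n * awPoly q a b c d m) =
      if m = n then awh q a b c d n else 0 := by
  obtain hb0 | rfl := ne_or_eq b 0
  · exact momentFunctional_awPoly_mul_awPoly_of_ne_zero hq hq0 ha0 hb0 hA hB hC hD m n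
  have hball : ball (0 : ℂ) 1 ∈ nhds 0 := Metric.ball_mem_nhds 0 one_pos
  have hleft : ContinuousAt (fun b ↦
      momentFunctional q {a, b, c, d} (awPoly q a b c d n * awPoly q a b c d m)) 0 := by
    have h := continuousOn_momentFunctional_cons (T := {a, c, d})
      (f := fun b ↦ awPoly q a b c d n * awPoly q a b c d m) hq (by simp [hA, hC, hD]) <| by
        simp only [eval_mul]
        exact (continuousOn_eval_awPoly hq hA hC hD n).mul
          (continuousOn_eval_awPoly hq hA hC hD m)
    simpa only [Multiset.insert_eq_cons, Multiset.cons_swap a] using h.continuousAt hball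
  have hright : ContinuousAt (fun b ↦ if m = n then awh q a b c d n else 0) 0 := by
    split_ifs
    · exact (continuousOn_awh hq hA hC hD n).continuousAt hball
    · exact continuousAt_const
  refine ((hleft.eventuallyEq_nhds_iff_eventuallyEq_nhdsNE hright).1 ?_).eq_of_nhds
  filter_upwards [self_mem_nhdsWithin, mem_nhdsWithin_of_mem_nhds hball] with b hb0 hb
  exact momentFunctional_awPoly_mul_awPoly_of_ne_zero hq hq0 ha0 hb0 hA (mem_ball_zero_iff.1 hb)
    hC hD m n

end Norms

/- On the unit circle `z⁻¹` is the conjugate of `z`, so the weight is a quotient of squared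
moduli. -/
lemma exists_nonneg_weight_eq {q : ℂ} (hq : ‖q‖ < 1) (hqconj : starRingEnd ℂ q = q)
    {T : Multiset ℂ} (hT : T.map (starRingEnd ℂ) = T) {z : ℂ} (hz : z ∈ sphere (0 : ℂ) 1) :
    ∃ w : ℝ, 0 ≤ w ∧ weight q T z = (w : ℂ) := by
  have hconj : starRingEnd ℂ z = z⁻¹ := (Complex.inv_eq_conj (mem_sphere_zero_iff_norm.1 hz)).symm
  have hqpi (t y : ℂ) :
      qpi q (starRingEnd ℂ t * starRingEnd ℂ y) = starRingEnd ℂ (qpi q (t * y)) := by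
    rw [conj_qpi hq, hqconj, map_mul]
  have hnum : qpiPair q 1 (z ^ 2) = Complex.normSq (qpi q (z ^ 2)) := by
    rw [← Complex.mul_conj, conj_qpi hq, hqconj, map_pow, hconj, qpiPair, one_mul, one_mul, inv_pow]
  have hden : (T.map fun t ↦ qpiPair q t z).prod =
      Complex.normSq (T.map fun t ↦ qpi q (t * z)).prod := by
    have hinv : (T.map fun t ↦ qpi q (t * z⁻¹)).prod =
        starRingEnd ℂ (T.map fun t ↦ qpi q (t * z)).prod := by
      conv_lhs => rw [← hT]
      simp only [map_multiset_prod, Multiset.map_map, Function.comp_def, ← hconj, hqpi]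
    simp only [qpiPair, Multiset.prod_map_mul]
    rw [hinv, Complex.mul_conj]
  refine ⟨_, div_nonneg (Complex.normSq_nonneg (qpi q (z ^ 2)))
    (Complex.normSq_nonneg (T.map fun t ↦ qpi q (t * z)).prod), ?_⟩
  rw [weight_eq_div hq, hnum, hden, Complex.ofReal_div]

end AskeyWilson

open AskeyWilson in
theorem stmt19_general (q : ℂ) (hq0 : q ≠ 0) (hq1 : ‖q‖ < 1) (a b c d : ℂ) (ha0 : a ≠ 0)
    (hA : ‖a‖ < 1) (hB : ‖b‖ < 1) (hC : ‖c‖ < 1) (hD : ‖d‖ < 1) :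
    (∀ m n : ℕ,
      (2 * (Real.pi : ℂ))⁻¹ * ∫ θ in (0 : ℝ)..Real.pi,
          awp q a b c d n (Real.cos θ : ℂ) * awp q a b c d m (Real.cos θ : ℂ) *
            AWw q a b c d (Complex.exp (θ * Complex.I)) =
        if m = n then awh q a b c d n else 0) ∧
    (starRingEnd ℂ q = q → ({a, b, c, d} : Multiset ℂ).map (starRingEnd ℂ) = {a, b, c, d} →
      ∀ z ∈ Metric.sphere (0 : ℂ) 1, ∃ w : ℝ, 0 ≤ w ∧ AWw q a b c d z = (w : ℂ)) := by
  have hT := forall_mem_norm_lt_one hA hB hC hD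
  refine ⟨fun m n ↦ ?_, fun hqconj hconj z hz ↦ ?_⟩
  · rw [← momentFunctional_awPoly_mul_awPoly hq1 hq0 ha0 hA hB hC hD,
      momentFunctional_eq_integral hq1 hT]
    simp only [eval_mul, eval_awPoly, AWw_eq_weight hq1]
  · rw [AWw_eq_weight hq1]
    exact exists_nonneg_weight_eq hq1 hqconj hconj hz

/-- Orthogonality of the Askey-Wilson polynomials (here `a ≠ 0`, as in the defining
formula): for `0<q<1` and `|a|,|b|,|c|,|d|<1`,
`(2π)⁻¹ ∫_0^π p_n(cos θ) p_m(cos θ) w_{a,b,c,d}(e^{iθ}) dθ = δ_{m,n} h_n`.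
Moreover, if `{a,b,c,d}` is invariant under complex conjugation (i.e. the parameters
are real or occur in complex-conjugate pairs) then the weight `w_{a,b,c,d}(e^{iθ})`
is a nonnegative real number for each `θ ∈ [0,π]`. -/
theorem stmt19 (q : ℝ) (hq0 : 0 < q) (hq1 : q < 1) (a b c d : ℂ) (ha0 : a ≠ 0)
    (hA : ‖a‖ < 1) (hB : ‖b‖ < 1) (hC : ‖c‖ < 1) (hD : ‖d‖ < 1) :
    (∀ m n : ℕ,
      (2 * (Real.pi : ℂ))⁻¹ *
          ∫ θ in (0 : ℝ)..Real.pi,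
            awp (q : ℂ) a b c d n ((Real.cos θ : ℝ) : ℂ) *
              awp (q : ℂ) a b c d m ((Real.cos θ : ℝ) : ℂ) *
              AWw (q : ℂ) a b c d (Complex.exp ((θ : ℂ) * Complex.I)) =
        if m = n then awh (q : ℂ) a b c d n else 0) ∧
    ((({a, b, c, d} : Multiset ℂ).map (starRingEnd ℂ) = {a, b, c, d}) →
      ∀ θ : ℝ, θ ∈ Set.Icc (0 : ℝ) Real.pi →
        ∃ w : ℝ, 0 ≤ w ∧
          AWw (q : ℂ) a b c d (Complex.exp ((θ : ℂ) * Complex.I)) = (w : ℂ)) := by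
  obtain ⟨hortho, hpos⟩ := stmt19_general q (by exact_mod_cast hq0.ne')
    (by rwa [Complex.norm_of_nonneg hq0.le]) a b c d ha0 hA hB hC hD
  exact ⟨hortho, fun hconj θ _ ↦ hpos (Complex.conj_ofReal q) hconj _ (by simp)⟩
end
end
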